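/- Let T'_{B,m} be the finite set consisting of: all L*₁◇-provable bracket-free sequents with at most 2 antecedent types, all guarded over B of length ≤ m; the sequent ⟨⟩ ⇒ ◇1; all sequents ⟨A⟩ ⇒ ◇A and ⟨□↓A⟩ ⇒ A for guarded A over B with ||A|| ≤ m−2. Then for any L*₁◇ sequent Γ ⇒ A_{n+1} whose yield consists of guarded types over B each of length ≤ m: Γ ⇒ A_{n+1} is provable in L*₁◇ if and only if it is derivable from T'_{B,m} using only Cut. -/

import Mathlib

/-- Types of the bracketed Lambek calculus. -/
inductive PTy where
  | prim : ℕ → PTy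
  | one  : PTy
  | ldiv : PTy → PTy → PTy   -- ldiv A B = A \ B
  | rdiv : PTy → PTy → PTy   -- rdiv B A = B / A
  | mul  : PTy → PTy → PTy
  | dia  : PTy → PTy
  | box  : PTy → PTy
deriving DecidableEq

/-- Type trees: leaves labeled by types, internal nodes are brackets. -/
inductive PTree where
  | leaf : PTy → PTree
  | node : List PTree → PTree

abbrev PHedge := List PTree

/-- Contexts: a hedge with one distinguished hole. -/
inductive PCtx where
  | hole : PHedge → PHedge → PCtx
  | brk  : PCtx → PHedge → PHedge → PCtx

/-- Substitution of a hedge for the hole of a context. -/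
def PCtx.plug : PCtx → PHedge → PHedge
  | .hole pre post, D => pre ++ D ++ post
  | .brk c pre post, D => pre ++ (PTree.node (c.plug D) :: post)

/-- All primitive types occurring in the type belong to `B`. -/
def PTy.over (B : Finset ℕ) : PTy → Prop
  | .prim p => p ∈ B
  | .one => True
  | .ldiv A C => A.over B ∧ C.over B
  | .rdiv C A => C.over B ∧ A.over B
  | .mul A C => A.over B ∧ C.over B
  | .dia A => A.over B
  | .box A => A.over B

/-- Length of a type. -/
def lenP : PTy → ℕ
  | .prim _ => 1
  | .one => 0
  | .ldiv A B => lenP A + lenP B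
  | .rdiv B A => lenP B + lenP A
  | .mul A B => lenP A + lenP B
  | .dia A => lenP A + 2
  | .box A => lenP A + 2

mutual
/-- The yield of a tree: the sequence of types labeling its leaves. -/
def yieldTree : PTree → List PTy
  | .leaf A => [A]
  | .node ts => yieldHedge ts
/-- The yield of a hedge. -/
def yieldHedge : List PTree → List PTy
  | [] => []
  | t :: ts => yieldTree t ++ yieldHedge ts
end
/-- L*₁◇ : the Lambek calculus with brackets and unit, empty antecedents allowed. -/
inductive PProvS1 : PHedge → PTy → Prop where
  | id (p) : PProvS1 [.leaf (.prim p)] (.prim p)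
  | ldivL (G : PHedge) (D : PCtx) (A B C) :
      PProvS1 G A → PProvS1 (D.plug [.leaf B]) C →
      PProvS1 (D.plug (G ++ [.leaf (.ldiv A B)])) C
  | ldivR (Pi : PHedge) (A B) :
      PProvS1 (.leaf A :: Pi) B → PProvS1 Pi (.ldiv A B)
  | rdivL (G : PHedge) (D : PCtx) (A B C) :
      PProvS1 G A → PProvS1 (D.plug [.leaf B]) C →
      PProvS1 (D.plug (.leaf (.rdiv B A) :: G)) C
  | rdivR (Pi : PHedge) (A B) :
      PProvS1 (Pi ++ [.leaf A]) B → PProvS1 Pi (.rdiv B A)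
  | mulL (G : PCtx) (A B C) :
      PProvS1 (G.plug [.leaf A, .leaf B]) C → PProvS1 (G.plug [.leaf (.mul A B)]) C
  | mulR (G D : PHedge) (A B) :
      PProvS1 G A → PProvS1 D B → PProvS1 (G ++ D) (.mul A B)
  | diaL (G : PCtx) (A B) :
      PProvS1 (G.plug [.node [.leaf A]]) B → PProvS1 (G.plug [.leaf (.dia A)]) B
  | diaR (G : PHedge) (A) :
      PProvS1 G A → PProvS1 [.node G] (.dia A)
  | boxL (G : PCtx) (A B) :
      PProvS1 (G.plug [.leaf A]) B → PProvS1 (G.plug [.node [.leaf (.box A)]]) B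
  | boxR (G : PHedge) (A) :
      PProvS1 [.node G] A → PProvS1 G (.box A)
  | oneL (G : PCtx) (A) :
      PProvS1 (G.plug []) A → PProvS1 (G.plug [.leaf .one]) A
  | oneR : PProvS1 [] .one
  | cut (G : PHedge) (D : PCtx) (A B) :
      PProvS1 G A → PProvS1 (D.plug [.leaf A]) B → PProvS1 (D.plug G) B
/-- Derivability of a sequent from a set of sequents using the Cut rule only. -/
inductive CutDeriv (S : Set (PHedge × PTy)) : PHedge → PTy → Prop where
  | base (G A) : (G, A) ∈ S → CutDeriv S G A
  | cut (G : PHedge) (D : PCtx) (A B) :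
      CutDeriv S G A → CutDeriv S (D.plug [.leaf A]) B → CutDeriv S (D.plug G) B
/-- Guarded types: the unit occurs only as the immediate subtype of `◇`. -/
def PTy.guarded : PTy → Prop
  | .prim _ => True
  | .one => False
  | .ldiv A B => A.guarded ∧ B.guarded
  | .rdiv B A => B.guarded ∧ A.guarded
  | .mul A B => A.guarded ∧ B.guarded
  | .dia .one => True
  | .dia A => A.guarded
  | .box A => A.guarded

/-- The set `S'_{B,m}` of L*₁◇-provable bracket-free sequents with at most 2 antecedent
types, all guarded types over `B` of length at most `m`. -/
def SBm' (B : Finset ℕ) (m : ℕ) : Set (PHedge × PTy) :=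
  {s | ∃ (L : List PTy) (A : PTy),
        s = (L.map PTree.leaf, A) ∧ L.length ≤ 2 ∧
        (∀ T ∈ A :: L, T.guarded ∧ T.over B ∧ lenP T ≤ m) ∧
        PProvS1 (L.map PTree.leaf) A}

/-- The set `T'_{B,m}`. -/
def TBm' (B : Finset ℕ) (m : ℕ) : Set (PHedge × PTy) :=
  SBm' B m ∪
  {([PTree.node []], PTy.dia .one)} ∪
  {s | ∃ A : PTy, A.guarded ∧ A.over B ∧ lenP A ≤ m - 2 ∧
        s = ([PTree.node [PTree.leaf A]], PTy.dia A)} ∪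
  {s | ∃ A : PTy, A.guarded ∧ A.over B ∧ lenP A ≤ m - 2 ∧
        s = ([PTree.node [PTree.leaf (PTy.box A)]], A)}

/-!
Semantic cut elimination: a predicate on sequents closed under the cut-free rules for guarded types
contains every provable guarded sequent, as the sets of hedges closed with respect to it form a
model. It is applied twice.

*Bracket-free sequents.* Label the primitive types and the modalities of a cut-free derivation so
that every label occurs at most twice in the end sequent. Maehara interpolation gives each
nonempty segment of the antecedent an interpolant whose labels are among those shared by the segment
and the rest of the sequent. Send one label `p` to a transposition in `S₃`, another label `q` to a
different one, and all others to the identity: a provable sequent takes the same value on both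
sides, whereas `p, q, p, q` with two non-commuting involutions does not. So the two occurrences of
`p` never cross those of `q`, and this makes the number of labels shared by a segment with its
complement satisfy a four-point inequality. By it, in a sequent with at least three antecedent types
of length `≤ m` some adjacent pair has an interpolant of length `≤ m`. Cutting along it shortens the
antecedent.

*Brackets.* The sequents with which a hedge can be flattened from the bottom up, using
`⟨⟩ ⇒ ◇1`, `⟨A⟩ ⇒ ◇A` and `⟨□↓A⟩ ⇒ A`, to a provable bracket-free sequent are closed under the
cut-free rules.
-/

attribute [local simp] PCtx.plug

/-! ### Contexts and derived rules -/

namespace PCtx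

/-- Composition of contexts: `D.comp E` is `D` with its hole filled by `E`. -/
def comp : PCtx → PCtx → PCtx
  | .hole a b, .hole c d => .hole (a ++ c) (d ++ b)
  | .hole a b, .brk E c d => .brk E (a ++ c) (d ++ b)
  | .brk D a b, E => .brk (D.comp E) a b

@[simp]
theorem plug_comp (D E : PCtx) (X : PHedge) : (D.comp E).plug X = D.plug (E.plug X) := by
  induction D with
  | hole a b => cases E <;> simp [comp]
  | brk D a b ih => simp [comp, ih]

end PCtx

namespace PProvS1

theorem refl (A : PTy) : PProvS1 [.leaf A] A := by
  induction A with
  | prim p => exact .id p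
  | one => simpa using PProvS1.oneL (.hole [] []) .one (by simpa using oneR)
  | ldiv A B ihA ihB =>
    exact .ldivR _ _ _ (by simpa using PProvS1.ldivL [.leaf A] (.hole [] []) A B B ihA (by simpa))
  | rdiv B A ihB ihA =>
    exact .rdivR _ _ _ (by simpa using PProvS1.rdivL [.leaf A] (.hole [] []) A B B ihA (by simpa))
  | mul A B ihA ihB =>
    simpa using mulL (.hole [] []) A B (.mul A B) (by simpa using mulR _ _ _ _ ihA ihB)
  | dia A ih => simpa using diaL (.hole [] []) A (.dia A) (by simpa using diaR _ _ ih)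
  | box A ih => exact .boxR _ _ (by simpa using boxL (.hole [] []) A A (by simpa))

theorem node_box (A : PTy) : PProvS1 [.node [.leaf (.box A)]] A := by
  simpa using boxL (.hole [] []) A A (by simpa using refl A)

theorem node_nil : PProvS1 [.node []] (.dia .one) := .diaR _ _ .oneR

theorem diaOneL (D : PCtx) {C : PTy} (h : PProvS1 (D.plug [.node []]) C) :
    PProvS1 (D.plug [.leaf (.dia .one)]) C :=
  .diaL _ _ _ <| by
    simpa using PProvS1.oneL (D.comp (.brk (.hole [] []) [] [])) C (by simpa using h)

end PProvS1

/-! ### Semantic cut elimination -/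

/-- A class of types without the unit that is closed under immediate subtypes, apart from the unit
below `◇`. -/
structure IsGuardedClass (ok : PTy → Prop) : Prop where
  not_one : ¬ ok .one
  of_ldiv {A B : PTy} : ok (.ldiv A B) → ok A ∧ ok B
  of_rdiv {A B : PTy} : ok (.rdiv B A) → ok A ∧ ok B
  of_mul {A B : PTy} : ok (.mul A B) → ok A ∧ ok B
  of_dia {A : PTy} : A ≠ .one → ok (.dia A) → ok A
  of_box {A : PTy} : ok (.box A) → ok A

/-- `Q` is closed under the cut-free rules with principal type in `ok`. The unit has no rules of
its own; `◇1` is treated as an atom that stands for `⟨⟩`. -/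
structure CutFreeClosed (ok : PTy → Prop) (Q : PHedge → PTy → Prop) : Prop where
  id p : ok (.prim p) → Q [.leaf (.prim p)] (.prim p)
  ldivL G (D : PCtx) A B C : ok (.ldiv A B) → Q G A → Q (D.plug [.leaf B]) C →
    Q (D.plug (G ++ [.leaf (.ldiv A B)])) C
  ldivR G A B : ok (.ldiv A B) → Q (.leaf A :: G) B → Q G (.ldiv A B)
  rdivL G (D : PCtx) A B C : ok (.rdiv B A) → Q G A → Q (D.plug [.leaf B]) C →
    Q (D.plug (.leaf (.rdiv B A) :: G)) C
  rdivR G A B : ok (.rdiv B A) → Q (G ++ [.leaf A]) B → Q G (.rdiv B A)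
  mulL (D : PCtx) A B C : ok (.mul A B) → Q (D.plug [.leaf A, .leaf B]) C →
    Q (D.plug [.leaf (.mul A B)]) C
  mulR G H A B : ok (.mul A B) → Q G A → Q H B → Q (G ++ H) (.mul A B)
  diaL (D : PCtx) A C : A ≠ .one → ok (.dia A) → Q (D.plug [.node [.leaf A]]) C →
    Q (D.plug [.leaf (.dia A)]) C
  diaR G A : A ≠ .one → ok (.dia A) → Q G A → Q [.node G] (.dia A)
  boxL (D : PCtx) A C : ok (.box A) → Q (D.plug [.leaf A]) C →
    Q (D.plug [.node [.leaf (.box A)]]) C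
  boxR G A : ok (.box A) → Q [.node G] A → Q G (.box A)
  diaOneL (D : PCtx) C : ok (.dia .one) → Q (D.plug [.node []]) C →
    Q (D.plug [.leaf (.dia .one)]) C
  diaOneR : ok (.dia .one) → Q [.node []] (.dia .one)

/-- The closure operator on sets of hedges induced by `Q`: the closed sets are the intersections of
sets of the form `{X | Q (D.plug X) C}`. -/
def contextClosure (Q : PHedge → PTy → Prop) : ClosureOperator (Set PHedge) :=
  extentClosure fun X (c : PCtx × PTy) => Q (c.1.plug X) c.2

section Semantics

variable {ok : PTy → Prop} {Q : PHedge → PTy → Prop} {S T : Set PHedge} {X : PHedge}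

theorem mem_contextClosure :
    X ∈ contextClosure Q S ↔ ∀ (D : PCtx) C, (∀ Y ∈ S, Q (D.plug Y) C) → Q (D.plug X) C :=
  ⟨fun h D C hS => h (b := (D, C)) fun Y hY => hS Y hY, fun h c hc => h c.1 c.2 fun _ hY => hc hY⟩

theorem subset_contextClosure : S ⊆ contextClosure Q S :=
  (contextClosure Q).le_closure S

theorem of_mem_contextClosure {A : PTy} (hX : X ∈ contextClosure Q S) (hS : ∀ Y ∈ S, Q Y A) :
    Q X A := by
  simpa using mem_contextClosure.1 hX (.hole [] []) A (by simpa using hS)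

theorem plug_mem_of_isClosed (hT : (contextClosure Q).IsClosed T) (E : PCtx)
    (hS : ∀ Y ∈ S, E.plug Y ∈ T) (hX : X ∈ contextClosure Q S) : E.plug X ∈ T := by
  rw [← hT.closure_eq, mem_contextClosure]
  intro D C hD
  simpa using mem_contextClosure.1 hX (D.comp E) C fun Y hY => by simpa using hD _ (hS Y hY)

/-- The truth value of a type: a closed set of hedges. -/
def denotation (Q : PHedge → PTy → Prop) : PTy → Set PHedge
  | .prim p => {X | Q X (.prim p)}
  | .one => contextClosure Q {[]}
  | .ldiv A B => {X | ∀ Y ∈ denotation Q A, Y ++ X ∈ denotation Q B}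
  | .rdiv B A => {X | ∀ Y ∈ denotation Q A, X ++ Y ∈ denotation Q B}
  | .mul A B => contextClosure Q (Set.image2 (· ++ ·) (denotation Q A) (denotation Q B))
  | .dia A => contextClosure Q ((fun X => [.node X]) '' denotation Q A)
  | .box A => {X | [.node X] ∈ denotation Q A}

theorem isClosed_denotation (A : PTy) : (contextClosure Q).IsClosed (denotation Q A) := by
  induction A with
  | prim p =>
    refine (contextClosure Q).isClosed_iff_closure_le.2 fun X hX => ?_
    exact of_mem_contextClosure hX fun _ => id
  | one | mul | dia => exact (contextClosure Q).isClosed_closure _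
  | ldiv A B _ ihB =>
    refine (contextClosure Q).isClosed_iff_closure_le.2 fun X hX Y hY => ?_
    simpa using plug_mem_of_isClosed ihB (.hole Y []) (fun Z hZ => by simpa using hZ Y hY) hX
  | rdiv B A ihB _ =>
    refine (contextClosure Q).isClosed_iff_closure_le.2 fun X hX Y hY => ?_
    simpa using plug_mem_of_isClosed ihB (.hole [] Y) (fun Z hZ => by simpa using hZ Y hY) hX
  | box A ih =>
    refine (contextClosure Q).isClosed_iff_closure_le.2 fun X hX => ?_
    simpa [denotation] using plug_mem_of_isClosed ih (.brk (.hole [] []) [] [])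
      (fun Z hZ => by simpa using show [.node Z] ∈ denotation Q A from hZ) hX

/-- `Realizes Q H X`: the hedge `X` arises from `H` by replacing each leaf by a member of the
denotation of its type. -/
inductive Realizes (Q : PHedge → PTy → Prop) : PHedge → PHedge → Prop
  | nil : Realizes Q [] []
  | leaf {A X H Y} : X ∈ denotation Q A → Realizes Q H Y → Realizes Q (.leaf A :: H) (X ++ Y)
  | node {K X H Y} : Realizes Q K X → Realizes Q H Y → Realizes Q (.node K :: H) (.node X :: Y)

namespace Realizes

variable {H K Y Z : PHedge}

theorem append (hH : Realizes Q H X) (hK : Realizes Q K Y) : Realizes Q (H ++ K) (X ++ Y) := by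
  induction hH with
  | nil => exact hK
  | leaf hA _ ih => simpa using leaf hA ih
  | node h _ _ ih => exact .node h ih

theorem exists_of_append (h : Realizes Q (H ++ K) Z) :
    ∃ X Y, Z = X ++ Y ∧ Realizes Q H X ∧ Realizes Q K Y := by
  induction H generalizing Z with
  | nil => exact ⟨[], Z, rfl, .nil, h⟩
  | cons t H ih =>
    cases h with
    | leaf hA h =>
      obtain ⟨X, Y, rfl, hX, hY⟩ := ih h
      exact ⟨_, Y, (List.append_assoc _ _ _).symm, .leaf hA hX, hY⟩
    | node hK h =>
      obtain ⟨X, Y, rfl, hX, hY⟩ := ih h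
      exact ⟨_, Y, rfl, .node hK hX, hY⟩

theorem exists_of_plug (D : PCtx) (h : Realizes Q (D.plug H) Z) :
    ∃ (E : PCtx) (X : PHedge), Z = E.plug X ∧ Realizes Q H X ∧
      ∀ H' X', Realizes Q H' X' → Realizes Q (D.plug H') (E.plug X') := by
  induction D generalizing Z with
  | hole a b =>
    obtain ⟨aH, b', rfl, haH, hb⟩ := exists_of_append h
    obtain ⟨a', X, rfl, ha, hX⟩ := exists_of_append haH
    exact ⟨.hole a' b', X, rfl, hX, fun H' X' h' => (ha.append h').append hb⟩
  | brk c a b ih =>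
    obtain ⟨a', cb, rfl, ha, hcb⟩ := exists_of_append h
    cases hcb with
    | node hc hb =>
      obtain ⟨E, X, rfl, hX, hE⟩ := ih hc
      exact ⟨.brk E a' _, X, rfl, hX, fun H' X' h' => ha.append (.node (hE _ _ h') hb)⟩

theorem singleton_leaf_iff {A : PTy} : Realizes Q [.leaf A] X ↔ X ∈ denotation Q A := by
  refine ⟨fun h => ?_, fun h => by simpa using leaf h nil⟩
  cases h with
  | leaf hA h => cases h; simpa using hA

theorem singleton_node_iff :
    Realizes Q [.node K] X ↔ ∃ Y, X = [.node Y] ∧ Realizes Q K Y := by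
  refine ⟨fun h => ?_, ?_⟩
  · cases h with
    | node hK h => cases h; exact ⟨_, rfl, hK⟩
  · rintro ⟨Y, rfl, hK⟩
    exact node hK nil

theorem mem_denotation_of_append_ldiv {A B : PTy}
    (hH : ∀ ⦃Y⦄, Realizes Q H Y → Y ∈ denotation Q A)
    (hZ : Realizes Q (H ++ [.leaf (.ldiv A B)]) Z) : Z ∈ denotation Q B := by
  obtain ⟨X, Y, rfl, hX, hY⟩ := hZ.exists_of_append
  exact singleton_leaf_iff.1 hY _ (hH hX)

theorem mem_denotation_of_rdiv_cons {A B : PTy}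
    (hH : ∀ ⦃Y⦄, Realizes Q H Y → Y ∈ denotation Q A)
    (hZ : Realizes Q (.leaf (.rdiv B A) :: H) Z) : Z ∈ denotation Q B := by
  obtain ⟨X, Y, rfl, hX, hY⟩ := exists_of_append (H := [_]) hZ
  exact singleton_leaf_iff.1 hX _ (hH hY)

theorem mem_denotation_of_node_box {A : PTy} (hZ : Realizes Q [.node [.leaf (.box A)]] Z) :
    Z ∈ denotation Q A := by
  obtain ⟨Y, rfl, hY⟩ := singleton_node_iff.1 hZ
  have hYA : Y ∈ denotation Q (.box A) := singleton_leaf_iff.1 hY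
  exact hYA

end Realizes

/-- A left rule holds in the model as soon as every realization of its principal part is in the
closure of the realizations of the part of the premise that it replaces. -/
theorem mem_denotation_of_realizes_plug {H H' : PHedge} {D : PCtx} {C : PTy}
    (prem : ∀ X, Realizes Q (D.plug H') X → X ∈ denotation Q C)
    (rule : ∀ X, Realizes Q H X → X ∈ contextClosure Q {Y | Realizes Q H' Y})
    (hX : Realizes Q (D.plug H) X) : X ∈ denotation Q C := by
  obtain ⟨E, Y, rfl, hY, hE⟩ := hX.exists_of_plug
  exact plug_mem_of_isClosed (isClosed_denotation C) E (fun Z hZ => prem _ (hE _ _ hZ)) (rule Y hY)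

open Realizes in
theorem PProvS1.mem_denotation {H : PHedge} {C : PTy} (h : PProvS1 H C) (hX : Realizes Q H X) :
    X ∈ denotation Q C := by
  induction h generalizing X with
  | id p => exact singleton_leaf_iff.1 hX
  | ldivL G D A B C _ _ ihA ihC =>
    exact mem_denotation_of_realizes_plug @ihC (fun Z hZ =>
      subset_contextClosure (singleton_leaf_iff.2 (hZ.mem_denotation_of_append_ldiv @ihA))) hX
  | ldivR _ _ _ _ ih => exact fun Y hY => ih (.leaf hY hX)
  | rdivL G D A B C _ _ ihA ihC =>
    exact mem_denotation_of_realizes_plug @ihC (fun Z hZ =>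
      subset_contextClosure (singleton_leaf_iff.2 (hZ.mem_denotation_of_rdiv_cons @ihA))) hX
  | rdivR _ _ _ _ ih => exact fun Y hY => ih (hX.append (singleton_leaf_iff.2 hY))
  | mulL D A B C _ ih =>
    refine mem_denotation_of_realizes_plug @ih (fun Z hZ => ?_) hX
    refine (contextClosure Q).monotone ?_ (singleton_leaf_iff.1 hZ)
    rintro _ ⟨Y₁, h₁, Y₂, h₂, rfl⟩
    exact .leaf h₁ (singleton_leaf_iff.2 h₂)
  | mulR G D A B _ _ ihA ihB =>
    obtain ⟨Y₁, Y₂, rfl, h₁, h₂⟩ := hX.exists_of_append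
    exact subset_contextClosure ⟨_, ihA h₁, _, ihB h₂, rfl⟩
  | diaL D A C _ ih =>
    refine mem_denotation_of_realizes_plug @ih (fun Z hZ => ?_) hX
    refine (contextClosure Q).monotone ?_ (singleton_leaf_iff.1 hZ)
    rintro _ ⟨Y, hY, rfl⟩
    exact .node (singleton_leaf_iff.2 hY) .nil
  | diaR G A _ ih =>
    obtain ⟨Y, rfl, hY⟩ := singleton_node_iff.1 hX
    exact subset_contextClosure ⟨_, ih hY, rfl⟩
  | boxL D A C _ ih =>
    exact mem_denotation_of_realizes_plug @ih (fun Z hZ =>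
      subset_contextClosure (singleton_leaf_iff.2 hZ.mem_denotation_of_node_box)) hX
  | boxR _ _ _ ih => exact ih (.node hX .nil)
  | oneL D C _ ih =>
    refine mem_denotation_of_realizes_plug @ih (fun Z hZ => ?_) hX
    exact (contextClosure Q).monotone (by rintro _ rfl; exact .nil) (singleton_leaf_iff.1 hZ)
  | oneR =>
    cases hX
    exact subset_contextClosure rfl
  | cut G D A C _ _ ihA ihC =>
    exact mem_denotation_of_realizes_plug @ihC
      (fun Z hZ => subset_contextClosure (singleton_leaf_iff.2 (ihA hZ))) hX

end Semantics

namespace CutFreeClosed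

variable {ok : PTy → Prop} {Q : PHedge → PTy → Prop} {A : PTy}

theorem leaf_mem_denotation_and_forall_mem (hok : IsGuardedClass ok) (hQ : CutFreeClosed ok Q)
    (hA : ok A) : [.leaf A] ∈ denotation Q A ∧ ∀ X ∈ denotation Q A, Q X A := by
  induction A with
  | prim p => exact ⟨hQ.id p hA, fun X h => h⟩
  | one => exact (hok.not_one hA).elim
  | ldiv A B ihA ihB =>
    obtain ⟨⟨leafA, denA⟩, leafB, denB⟩ := (hok.of_ldiv hA).imp ihA ihB
    refine ⟨fun Y hY => ?_, fun X hX => hQ.ldivR X A B hA (denB _ (hX _ leafA))⟩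
    rw [← (isClosed_denotation B).closure_eq, mem_contextClosure]
    exact fun D C h => hQ.ldivL Y D A B C hA (denA Y hY) (h _ leafB)
  | rdiv B A ihB ihA =>
    obtain ⟨⟨leafA, denA⟩, leafB, denB⟩ := (hok.of_rdiv hA).imp ihA ihB
    refine ⟨fun Y hY => ?_, fun X hX => hQ.rdivR X A B hA (denB _ (hX _ leafA))⟩
    rw [← (isClosed_denotation B).closure_eq, mem_contextClosure]
    exact fun D C h => hQ.rdivL Y D A B C hA (denA Y hY) (h _ leafB)
  | mul A B ihA ihB =>
    obtain ⟨⟨leafA, denA⟩, leafB, denB⟩ := (hok.of_mul hA).imp ihA ihB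
    refine ⟨mem_contextClosure.2 fun D C h => ?_, fun X hX => of_mem_contextClosure hX ?_⟩
    · exact hQ.mulL D A B C hA (h _ ⟨_, leafA, _, leafB, rfl⟩)
    · rintro _ ⟨Y, hY, Z, hZ, rfl⟩
      exact hQ.mulR _ _ _ _ hA (denA _ hY) (denB _ hZ)
  | dia A ihA =>
    obtain rfl | hne := eq_or_ne A .one
    · refine ⟨mem_contextClosure.2 fun D C h => ?_, fun X hX => of_mem_contextClosure hX ?_⟩
      · exact hQ.diaOneL D C hA (h _ ⟨[], subset_contextClosure rfl, rfl⟩)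
      · rintro _ ⟨Y, hY, rfl⟩
        simpa using mem_contextClosure.1 hY (.brk (.hole [] []) [] []) (.dia .one)
          (by rintro _ rfl; simpa using hQ.diaOneR hA)
    · obtain ⟨leafA, denA⟩ := ihA (hok.of_dia hne hA)
      refine ⟨mem_contextClosure.2 fun D C h => ?_, fun X hX => of_mem_contextClosure hX ?_⟩
      · exact hQ.diaL D A C hne hA (h _ ⟨_, leafA, rfl⟩)
      · rintro _ ⟨Y, hY, rfl⟩
        exact hQ.diaR _ _ hne hA (denA _ hY)
  | box A ihA =>
    obtain ⟨leafA, denA⟩ := ihA (hok.of_box hA)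
    refine ⟨?_, fun X hX => hQ.boxR _ _ hA (denA _ hX)⟩
    change _ ∈ denotation Q A
    rw [← (isClosed_denotation A).closure_eq, mem_contextClosure]
    exact fun D C h => hQ.boxL D A C hA (h _ leafA)

theorem realizes_self (hok : IsGuardedClass ok) (hQ : CutFreeClosed ok Q) :
    ∀ H : PHedge, (∀ A ∈ yieldHedge H, ok A) → Realizes Q H H
  | [], _ => .nil
  | .leaf A :: H, h =>
    have hA := h A (by simp [yieldHedge, yieldTree])
    .leaf (X := [.leaf A]) (hQ.leaf_mem_denotation_and_forall_mem hok hA).1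
      (hQ.realizes_self hok H fun B hB => h B (by simp [yieldHedge, hB]))
  | .node K :: H, h =>
    .node (hQ.realizes_self hok K fun B hB => h B (by simp [yieldHedge, yieldTree, hB]))
      (hQ.realizes_self hok H fun B hB => h B (by simp [yieldHedge, hB]))

theorem of_provable (hok : IsGuardedClass ok) (hQ : CutFreeClosed ok Q) {H : PHedge} {C : PTy}
    (hH : ∀ A ∈ yieldHedge H, ok A) (hC : ok C) (h : PProvS1 H C) : Q H C :=
  (hQ.leaf_mem_denotation_and_forall_mem hok hC).2 _ (h.mem_denotation (hQ.realizes_self hok H hH))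

end CutFreeClosed

/-! ### The labelled calculus -/

/-- Labels: `prim p l` marks an occurrence of the primitive type `p`, and `modality l` marks a
modality or a bracket. -/
inductive Label where
  | prim (p l : ℕ)
  | modality (l : ℕ)
deriving DecidableEq

namespace Label

/-- The number that distinguishes labels of the same kind. -/
def idx : Label → ℕ
  | prim _ l => l
  | modality l => l

/-- The contribution of a labelled symbol to the length of a type. -/
def weight : Label → ℕ
  | prim _ _ => 1
  | modality _ => 2

/-- The primitive type marked by a label, if any, is in `B`. -/
def Over (B : Finset ℕ) : Label → Prop
  | prim p _ => p ∈ B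
  | modality _ => True

end Label

/-- Guarded types with a label on each primitive type and each modality; `diaOne l` is `◇1`. -/
inductive LTy where
  | prim : ℕ → ℕ → LTy
  | ldiv : LTy → LTy → LTy
  | rdiv : LTy → LTy → LTy
  | mul : LTy → LTy → LTy
  | dia : ℕ → LTy → LTy
  | box : ℕ → LTy → LTy
  | diaOne : ℕ → LTy

/-- Type trees over labelled types, with labelled brackets. -/
inductive LTree where
  | leaf : LTy → LTree
  | node : ℕ → List LTree → LTree

/-- Hedges of labelled trees. -/
abbrev LHedge := List LTree

/-- Contexts of labelled hedges. -/
inductive LCtx where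
  | hole : LHedge → LHedge → LCtx
  | brk : ℕ → LCtx → LHedge → LHedge → LCtx

namespace LCtx

/-- Substitution of a labelled hedge for the hole of a context. -/
@[simp]
def plug : LCtx → LHedge → LHedge
  | .hole a b, X => a ++ X ++ b
  | .brk l D a b, X => a ++ .node l (D.plug X) :: b

/-- Composition of contexts: `D.comp E` is `D` with its hole filled by `E`. -/
def comp : LCtx → LCtx → LCtx
  | .hole a b, .hole c d => .hole (a ++ c) (d ++ b)
  | .hole a b, .brk l E c d => .brk l E (a ++ c) (d ++ b)
  | .brk l D a b, E => .brk l (D.comp E) a b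

@[simp]
theorem plug_comp (D E : LCtx) (X : LHedge) : (D.comp E).plug X = D.plug (E.plug X) := by
  induction D with
  | hole a b => cases E <;> simp [comp]
  | brk l D a b ih => simp [comp, ih]

end LCtx

/-- The cut-free labelled calculus: a modality carries the label of the bracket from which it was
introduced. -/
inductive LP : LHedge → LTy → Prop where
  | id (p l) : LP [.leaf (.prim p l)] (.prim p l)
  | ldivL (G : LHedge) (D : LCtx) (A B C) :
      LP G A → LP (D.plug [.leaf B]) C → LP (D.plug (G ++ [.leaf (.ldiv A B)])) C
  | ldivR (G : LHedge) (A B) : LP (.leaf A :: G) B → LP G (.ldiv A B)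
  | rdivL (G : LHedge) (D : LCtx) (A B C) :
      LP G A → LP (D.plug [.leaf B]) C → LP (D.plug (.leaf (.rdiv B A) :: G)) C
  | rdivR (G : LHedge) (A B) : LP (G ++ [.leaf A]) B → LP G (.rdiv B A)
  | mulL (D : LCtx) (A B C) :
      LP (D.plug [.leaf A, .leaf B]) C → LP (D.plug [.leaf (.mul A B)]) C
  | mulR (G H : LHedge) (A B) : LP G A → LP H B → LP (G ++ H) (.mul A B)
  | diaL (D : LCtx) (l A C) :
      LP (D.plug [.node l [.leaf A]]) C → LP (D.plug [.leaf (.dia l A)]) C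
  | diaR (G : LHedge) (l A) : LP G A → LP [.node l G] (.dia l A)
  | boxL (D : LCtx) (l A C) :
      LP (D.plug [.leaf A]) C → LP (D.plug [.node l [.leaf (.box l A)]]) C
  | boxR (G : LHedge) (l A) : LP [.node l G] A → LP G (.box l A)
  | diaOneL (D : LCtx) (l C) : LP (D.plug [.node l []]) C → LP (D.plug [.leaf (.diaOne l)]) C
  | diaOneR (l) : LP [.node l []] (.diaOne l)

section Erase

/-- The type obtained by forgetting the labels. -/
@[simp]
def LTy.erase : LTy → PTy
  | .prim p _ => .prim p
  | .ldiv A B => .ldiv A.erase B.erase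
  | .rdiv B A => .rdiv B.erase A.erase
  | .mul A B => .mul A.erase B.erase
  | .dia _ A => .dia A.erase
  | .box _ A => .box A.erase
  | .diaOne _ => .dia .one

/-- The type tree obtained by forgetting the labels. -/
@[simp]
def LTree.erase : LTree → PTree
  | .leaf A => .leaf A.erase
  | .node _ H => .node (H.map LTree.erase)

/-- The context obtained by forgetting the labels. -/
@[simp]
def LCtx.erase : LCtx → PCtx
  | .hole a b => .hole (a.map LTree.erase) (b.map LTree.erase)
  | .brk _ D a b => .brk D.erase (a.map LTree.erase) (b.map LTree.erase)

@[simp]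
theorem LCtx.map_erase_plug (D : LCtx) (X : LHedge) :
    (D.plug X).map LTree.erase = D.erase.plug (X.map LTree.erase) := by
  induction D with
  | hole a b => simp
  | brk l D a b ih => simp [ih]

theorem LP.erase {H : LHedge} {C : LTy} (h : LP H C) : PProvS1 (H.map LTree.erase) C.erase := by
  induction h with
  | id p l => simpa using PProvS1.id p
  | ldivL _ _ _ _ _ _ _ ihA ihC => simpa using .ldivL _ _ _ _ _ ihA (by simpa using ihC)
  | ldivR _ _ _ _ ih => exact .ldivR _ _ _ (by simpa using ih)
  | rdivL _ _ _ _ _ _ _ ihA ihC => simpa using .rdivL _ _ _ _ _ ihA (by simpa using ihC)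
  | rdivR _ _ _ _ ih => exact .rdivR _ _ _ (by simpa using ih)
  | mulL _ _ _ _ _ ih => simpa using .mulL _ _ _ _ (by simpa using ih)
  | mulR _ _ _ _ _ _ ihA ihB => simpa using .mulR _ _ _ _ ihA ihB
  | diaL _ _ _ _ _ ih => simpa using .diaL _ _ _ (by simpa using ih)
  | diaR _ _ _ _ ih => simpa using .diaR _ _ ih
  | boxL _ _ _ _ _ ih => simpa using .boxL _ _ _ (by simpa using ih)
  | boxR _ _ _ _ ih => exact .boxR _ _ (by simpa using ih)
  | diaOneL _ _ _ _ ih => simpa using PProvS1.diaOneL _ (by simpa using ih)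
  | diaOneR _ => simpa using PProvS1.node_nil

theorem LTree.erase_eq_leaf {t : LTree} {A : PTy} :
    t.erase = .leaf A ↔ ∃ A' : LTy, t = .leaf A' ∧ A'.erase = A := by
  cases t <;> simp

theorem LTree.erase_eq_node {t : LTree} {H : PHedge} :
    t.erase = .node H ↔ ∃ l K, t = .node l K ∧ K.map LTree.erase = H := by
  cases t <;> simp

theorem LTree.map_erase_eq_leaf {X : LHedge} {A : PTy} :
    X.map erase = [.leaf A] ↔ ∃ A' : LTy, X = [.leaf A'] ∧ A'.erase = A := by
  simp only [List.map_eq_singleton_iff, erase_eq_leaf]; grind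

theorem LTree.map_erase_eq_node {X : LHedge} {H : PHedge} :
    X.map erase = [.node H] ↔ ∃ l K, X = [.node l K] ∧ K.map erase = H := by
  simp only [List.map_eq_singleton_iff, erase_eq_node]; grind

theorem LCtx.exists_of_map_erase_eq_plug {D : PCtx} {H : LHedge} {X : PHedge}
    (h : H.map LTree.erase = D.plug X) :
    ∃ (D' : LCtx) (X' : LHedge), H = D'.plug X' ∧ D'.erase = D ∧ X'.map LTree.erase = X := by
  induction D generalizing H with
  | hole a b =>
    obtain ⟨aX, b, rfl, haX, rfl⟩ := List.map_eq_append_iff.1 h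
    obtain ⟨a, X, rfl, rfl, rfl⟩ := List.map_eq_append_iff.1 haX
    exact ⟨.hole a b, X, rfl, rfl, rfl⟩
  | brk D a b ih =>
    obtain ⟨a, tb, rfl, rfl, htb⟩ := List.map_eq_append_iff.1 h
    obtain ⟨t, b, rfl, ht, rfl⟩ := List.map_eq_cons_iff.1 htb
    obtain ⟨l, K, rfl, hK⟩ := LTree.erase_eq_node.1 ht
    obtain ⟨D, X, rfl, rfl, rfl⟩ := ih hK
    exact ⟨.brk l D a b, X, rfl, rfl, rfl⟩

end Erase

section Labels

/-- The multiset of labels of a type. -/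
@[simp]
def LTy.labels : LTy → Multiset Label
  | .prim p l => {.prim p l}
  | .ldiv A B => A.labels + B.labels
  | .rdiv B A => B.labels + A.labels
  | .mul A B => A.labels + B.labels
  | .dia l A => {.modality l} + A.labels
  | .box l A => {.modality l} + A.labels
  | .diaOne l => {.modality l}

/-- The multiset of labels of a type tree. -/
def LTree.labels : LTree → Multiset Label
  | .leaf A => A.labels
  | .node l H => {.modality l} + (H.map LTree.labels).sum

/-- The multiset of labels of a hedge. -/
def LHedge.labels (H : LHedge) : Multiset Label := (H.map LTree.labels).sum

@[simp]
theorem LHedge.labels_nil : LHedge.labels [] = 0 := rfl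

@[simp]
theorem LHedge.labels_cons (t : LTree) (H : LHedge) :
    LHedge.labels (t :: H) = t.labels + LHedge.labels H := by
  simp [labels]

@[simp]
theorem LHedge.labels_append (H K : LHedge) :
    LHedge.labels (H ++ K) = LHedge.labels H + LHedge.labels K := by
  simp [labels]

/-- The multiset of labels of a context. -/
@[simp]
def LCtx.labels : LCtx → Multiset Label
  | .hole a b => LHedge.labels a + LHedge.labels b
  | .brk l D a b => {.modality l} + D.labels + LHedge.labels a + LHedge.labels b

@[simp]
theorem LTree.labels_leaf (A : LTy) : (LTree.leaf A).labels = A.labels := by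
  rw [LTree.labels]

@[simp]
theorem LTree.labels_node (l : ℕ) (H : LHedge) :
    (LTree.node l H).labels = {.modality l} + LHedge.labels H := by
  rw [LTree.labels, LHedge.labels]

@[simp]
theorem LCtx.labels_plug (D : LCtx) (X : LHedge) :
    LHedge.labels (D.plug X) = D.labels + LHedge.labels X := by
  induction D with
  | hole a b => simp [add_comm, add_left_comm]
  | brk l D a b ih => simp [ih, add_comm, add_left_comm, add_assoc]

@[simp]
theorem LCtx.labels_comp (D E : LCtx) : (D.comp E).labels = D.labels + E.labels := by
  simpa using ((D.comp E).labels_plug []).symm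

theorem LP.even_count {H : LHedge} {C : LTy} (h : LP H C) (k : Label) :
    Even ((LHedge.labels H + C.labels).count k) := by
  induction h <;> simp only [Nat.even_iff, LHedge.labels_append, LHedge.labels_cons,
    LHedge.labels_nil, LCtx.labels_plug, LTree.labels_leaf, LTree.labels_node, LTy.labels,
    Multiset.count_add, Multiset.count_zero] at * <;> omega

end Labels

/-! ### Thin labellings -/

/-- The finite set of numbers used by the labels in `s`. -/
def Label.idxs (s : Multiset Label) : Finset ℕ := (s.map Label.idx).toFinset

/-- No label occurs more than twice in `s`, and the numbers in `S` are not used. -/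
def FreshThin (S : Finset ℕ) (s : Multiset Label) : Prop :=
  ∀ k, s.count k ≤ 2 ∧ (k ∈ s → k.idx ∉ S)

namespace FreshThin

variable {S : Finset ℕ} {s t : Multiset Label}

theorem pair {k : Label} (hk : k.idx ∉ S) : FreshThin S ({k} + {k}) := by
  intro j
  refine ⟨(Multiset.count_le_card j _).trans (by simp), ?_⟩
  simp only [Multiset.mem_add, Multiset.mem_singleton, or_self]
  rintro rfl
  exact hk

theorem add (hs : FreshThin S s) (ht : FreshThin (S ∪ Label.idxs s) t) :
    FreshThin S (s + t) := by
  intro k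
  by_cases hks : k ∈ s
  · have hkt : k ∉ t := fun h => (ht k).2 h <| by
      simpa [Label.idxs] using Or.inr ⟨k, hks, rfl⟩
    simpa [Multiset.count_eq_zero_of_notMem hkt, hks] using hs k
  · have hkt := ht k
    simp only [Finset.mem_union, not_or] at hkt
    simpa [Multiset.count_eq_zero_of_notMem hks, hks] using ⟨hkt.1, fun h => (hkt.2 h).1⟩

theorem pair_add {k : Label} (hk : k.idx ∉ S) (ht : FreshThin (S ∪ {k.idx}) t) :
    FreshThin S ({k} + {k} + t) :=
  (pair hk).add (by simpa [Label.idxs] using ht)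

end FreshThin

/-- The sequent has labelled versions that are derivable in the labelled calculus, in which every
label occurs at most twice, and which avoid any given finite set of numbers. -/
def ThinlyLabellable (H : PHedge) (C : PTy) : Prop :=
  ∀ S : Finset ℕ, ∃ H' C', LP H' C' ∧ H'.map LTree.erase = H ∧ C'.erase = C ∧
    FreshThin S (LHedge.labels H' + C'.labels)

namespace ThinlyLabellable

open LTree LCtx

variable {A B C : PTy} {D : PCtx} {G H : PHedge}

theorem id (p : ℕ) : ThinlyLabellable [.leaf (.prim p)] (.prim p) := by
  intro S
  obtain ⟨l, hl⟩ := Infinite.exists_notMem_finset S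
  exact ⟨[.leaf (.prim p l)], .prim p l, .id p l, by simp, by simp, by
    simpa [Multiset.singleton_add] using FreshThin.pair (k := .prim p l) hl⟩

theorem ldivL (hA : ThinlyLabellable G A) (hC : ThinlyLabellable (D.plug [.leaf B]) C) :
    ThinlyLabellable (D.plug (G ++ [.leaf (.ldiv A B)])) C := by
  intro S
  obtain ⟨G, A, dA, rfl, rfl, thinA⟩ := hA S
  obtain ⟨DB, C, dC, hDB, rfl, thinC⟩ := hC (S ∪ Label.idxs (LHedge.labels G + A.labels))
  obtain ⟨D, X, rfl, rfl, hX⟩ := exists_of_map_erase_eq_plug hDB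
  obtain ⟨B, rfl, rfl⟩ := map_erase_eq_leaf.1 hX
  refine ⟨_, C, .ldivL G D A B C dA dC, by simp, rfl, ?_⟩
  convert thinA.add thinC using 1
  simp [add_comm, add_left_comm, add_assoc]

theorem ldivR (h : ThinlyLabellable (.leaf A :: G) B) : ThinlyLabellable G (.ldiv A B) := by
  intro S
  obtain ⟨AG, B, d, hAG, rfl, thin⟩ := h S
  obtain ⟨t, G, rfl, ht, rfl⟩ := List.map_eq_cons_iff.1 hAG
  obtain ⟨A, rfl, rfl⟩ := erase_eq_leaf.1 ht
  refine ⟨G, _, .ldivR G A B d, rfl, rfl, ?_⟩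
  convert thin using 1
  simp [add_comm, add_left_comm]

theorem rdivL (hA : ThinlyLabellable G A) (hC : ThinlyLabellable (D.plug [.leaf B]) C) :
    ThinlyLabellable (D.plug (.leaf (.rdiv B A) :: G)) C := by
  intro S
  obtain ⟨G, A, dA, rfl, rfl, thinA⟩ := hA S
  obtain ⟨DB, C, dC, hDB, rfl, thinC⟩ := hC (S ∪ Label.idxs (LHedge.labels G + A.labels))
  obtain ⟨D, X, rfl, rfl, hX⟩ := exists_of_map_erase_eq_plug hDB
  obtain ⟨B, rfl, rfl⟩ := map_erase_eq_leaf.1 hX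
  refine ⟨_, C, .rdivL G D A B C dA dC, by simp, rfl, ?_⟩
  convert thinA.add thinC using 1
  simp [add_comm, add_left_comm, add_assoc]

theorem rdivR (h : ThinlyLabellable (G ++ [.leaf A]) B) : ThinlyLabellable G (.rdiv B A) := by
  intro S
  obtain ⟨GA, B, d, hGA, rfl, thin⟩ := h S
  obtain ⟨G, X, rfl, rfl, hX⟩ := List.map_eq_append_iff.1 hGA
  obtain ⟨A, rfl, rfl⟩ := map_erase_eq_leaf.1 hX
  refine ⟨G, _, .rdivR G A B d, rfl, rfl, ?_⟩
  convert thin using 1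
  simp [add_comm, add_left_comm]

theorem mulL (h : ThinlyLabellable (D.plug [.leaf A, .leaf B]) C) :
    ThinlyLabellable (D.plug [.leaf (.mul A B)]) C := by
  intro S
  obtain ⟨DAB, C, d, hDAB, rfl, thin⟩ := h S
  obtain ⟨D, X, rfl, rfl, hX⟩ := exists_of_map_erase_eq_plug hDAB
  obtain ⟨t, Y, rfl, ht, hY⟩ := List.map_eq_cons_iff.1 hX
  obtain ⟨A, rfl, rfl⟩ := erase_eq_leaf.1 ht
  obtain ⟨B, rfl, rfl⟩ := map_erase_eq_leaf.1 hY
  exact ⟨_, C, .mulL D A B C d, by simp, rfl, by simpa using thin⟩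

theorem mulR (hA : ThinlyLabellable G A) (hB : ThinlyLabellable H B) :
    ThinlyLabellable (G ++ H) (.mul A B) := by
  intro S
  obtain ⟨G, A, dA, rfl, rfl, thinA⟩ := hA S
  obtain ⟨H, B, dB, rfl, rfl, thinB⟩ := hB (S ∪ Label.idxs (LHedge.labels G + A.labels))
  refine ⟨_, _, .mulR G H A B dA dB, by simp, rfl, ?_⟩
  convert thinA.add thinB using 1
  simp [add_left_comm, add_assoc]

theorem diaL (h : ThinlyLabellable (D.plug [.node [.leaf A]]) C) :
    ThinlyLabellable (D.plug [.leaf (.dia A)]) C := by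
  intro S
  obtain ⟨DA, C, d, hDA, rfl, thin⟩ := h S
  obtain ⟨D, X, rfl, rfl, hX⟩ := exists_of_map_erase_eq_plug hDA
  obtain ⟨l, K, rfl, hK⟩ := map_erase_eq_node.1 hX
  obtain ⟨A, rfl, rfl⟩ := map_erase_eq_leaf.1 hK
  exact ⟨_, C, .diaL D l A C d, by simp, rfl, by simpa using thin⟩

theorem diaR (h : ThinlyLabellable G A) : ThinlyLabellable [.node G] (.dia A) := by
  intro S
  obtain ⟨l, hl⟩ := Infinite.exists_notMem_finset S
  obtain ⟨G, A, d, rfl, rfl, thin⟩ := h (S ∪ {l})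
  refine ⟨_, _, .diaR G l A d, by simp, rfl, ?_⟩
  convert FreshThin.pair_add (k := .modality l) hl thin using 1
  simp [add_comm, add_left_comm, add_assoc]

theorem boxL (h : ThinlyLabellable (D.plug [.leaf A]) C) :
    ThinlyLabellable (D.plug [.node [.leaf (.box A)]]) C := by
  intro S
  obtain ⟨l, hl⟩ := Infinite.exists_notMem_finset S
  obtain ⟨DA, C, d, hDA, rfl, thin⟩ := h (S ∪ {l})
  obtain ⟨D, X, rfl, rfl, hX⟩ := exists_of_map_erase_eq_plug hDA
  obtain ⟨A, rfl, rfl⟩ := map_erase_eq_leaf.1 hX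
  refine ⟨_, C, .boxL D l A C d, by simp, rfl, ?_⟩
  convert FreshThin.pair_add (k := .modality l) hl thin using 1
  simp [add_comm, add_left_comm, add_assoc]

theorem boxR (h : ThinlyLabellable [.node G] A) : ThinlyLabellable G (.box A) := by
  intro S
  obtain ⟨X, A, d, hX, rfl, thin⟩ := h S
  obtain ⟨l, G, rfl, rfl⟩ := map_erase_eq_node.1 hX
  refine ⟨G, _, .boxR G l A d, rfl, rfl, ?_⟩
  convert thin using 1
  simp

theorem diaOneL (h : ThinlyLabellable (D.plug [.node []]) C) :
    ThinlyLabellable (D.plug [.leaf (.dia .one)]) C := by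
  intro S
  obtain ⟨DX, C, d, hDX, rfl, thin⟩ := h S
  obtain ⟨D, X, rfl, rfl, hX⟩ := exists_of_map_erase_eq_plug hDX
  obtain ⟨l, K, rfl, hK⟩ := map_erase_eq_node.1 hX
  obtain rfl := List.map_eq_nil_iff.1 hK
  exact ⟨_, C, .diaOneL D l C d, by simp, rfl, by simpa using thin⟩

theorem diaOneR : ThinlyLabellable [.node []] (.dia .one) := by
  intro S
  obtain ⟨l, hl⟩ := Infinite.exists_notMem_finset S
  exact ⟨_, _, .diaOneR l, by simp, rfl, by
    simpa [Multiset.singleton_add] using FreshThin.pair (k := .modality l) hl⟩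

theorem cutFreeClosed (ok : PTy → Prop) : CutFreeClosed ok ThinlyLabellable where
  id p _ := id p
  ldivL _ _ _ _ _ _ := ldivL
  ldivR _ _ _ _ := ldivR
  rdivL _ _ _ _ _ _ := rdivL
  rdivR _ _ _ _ := rdivR
  mulL _ _ _ _ _ := mulL
  mulR _ _ _ _ _ := mulR
  diaL _ _ _ _ _ := diaL
  diaR _ _ _ _ := diaR
  boxL _ _ _ _ := boxL
  boxR _ _ _ := boxR
  diaOneL _ _ _ := diaOneL
  diaOneR _ := diaOneR

end ThinlyLabellable

/-! ### Interpolation -/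

namespace LCtx

@[simp]
theorem comp_hole_nil (D : LCtx) : D.comp (.hole [] []) = D := by
  induction D with
  | hole a b => simp [comp]
  | brk l D a b ih => simp [comp, ih]

@[simp]
theorem hole_nil_comp (D : LCtx) : (LCtx.hole [] []).comp D = D := by
  cases D <;> simp [comp]

theorem comp_assoc (D E F : LCtx) : (D.comp E).comp F = D.comp (E.comp F) := by
  induction D with
  | hole a b => cases E <;> cases F <;> simp [comp]
  | brk l D a b ih => simp [comp, ih]

theorem eq_nil_of_plug_eq_nil {D : LCtx} {X : LHedge} (h : D.plug X = []) : X = [] := by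
  cases D <;> simp_all

theorem singleton_eq_plug {D : LCtx} {X : LHedge} {t : LTree} (h : [t] = D.plug X)
    (hX : X ≠ []) : D = .hole [] [] ∧ X = [t] ∨
      ∃ l E, D = .brk l E [] [] ∧ t = .node l (E.plug X) := by
  cases D with
  | hole a b => left; cases a <;> cases X <;> simp_all
  | brk l D a b => right; cases a <;> simp_all

theorem append_eq_plug {D : LCtx} {X Y Z : LHedge} (h : Y ++ Z = D.plug X) :
    (∃ E : LCtx, D = (hole [] Z).comp E ∧ Y = E.plug X) ∨
    (∃ E : LCtx, D = (hole Y []).comp E ∧ Z = E.plug X) ∨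
    ∃ a x y b, x ≠ [] ∧ y ≠ [] ∧ D = hole a b ∧ X = x ++ y ∧ Y = a ++ x ∧ Z = y ++ b := by
  cases D with
  | hole a b =>
    simp only [plug, List.append_assoc] at h
    obtain ⟨u, rfl, rfl⟩ | ⟨u, rfl, hu⟩ := List.append_eq_append_iff.1 h
    · exact .inr (.inl ⟨.hole u b, by simp [comp]⟩)
    obtain ⟨v, rfl, rfl⟩ | ⟨v, rfl, rfl⟩ := List.append_eq_append_iff.1 hu
    · exact .inl ⟨.hole a v, by simp [comp]⟩
    obtain rfl | hu := eq_or_ne u []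
    · exact .inr (.inl ⟨.hole [] b, by simp [comp]⟩)
    obtain rfl | hv := eq_or_ne v []
    · exact .inl ⟨.hole a [], by simp [comp]⟩
    exact .inr (.inr ⟨a, u, v, b, hu, hv, rfl, rfl, rfl, rfl⟩)
  | brk l D a b =>
    obtain ⟨u, rfl, rfl⟩ | ⟨u, rfl, hu⟩ := List.append_eq_append_iff.1 h
    · exact .inr (.inl ⟨.brk l D u b, by simp [comp]⟩)
    obtain ⟨rfl, rfl⟩ | ⟨v, rfl, rfl⟩ := List.cons_eq_append_iff.1 hu
    · exact .inr (.inl ⟨.brk l D [] b, by simp [comp]⟩)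
    · exact .inl ⟨.brk l D a v, by simp [comp]⟩

end LCtx

/-- The possible relative positions of two segments `R` and `S` of the same hedge
`D.plug R = E.plug S`. In the disjoint case both segments can be replaced independently. -/
inductive Overlap : LCtx → LHedge → LCtx → LHedge → Prop
  | inside (D E : LCtx) (R) : Overlap (E.comp D) R E (D.plug R)
  | outside (D E : LCtx) (S) : Overlap D (E.plug S) (D.comp E) S
  | disjoint (P Q : LHedge → LCtx) (R S) (h : ∀ X Y, (P Y).plug X = (Q X).plug Y) :
      Overlap (P S) R (Q R) S
  | left (F : LCtx) (x y z) : x ≠ [] → y ≠ [] → z ≠ [] →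
      Overlap (F.comp (.hole x [])) (y ++ z) (F.comp (.hole [] z)) (x ++ y)
  | right (F : LCtx) (x y z) : x ≠ [] → y ≠ [] → z ≠ [] →
      Overlap (F.comp (.hole [] z)) (x ++ y) (F.comp (.hole x [])) (y ++ z)

namespace Overlap

variable {D E : LCtx} {R S : LHedge}

theorem symm (h : Overlap D R E S) : Overlap E S D R := by
  cases h with
  | inside => exact .outside ..
  | outside => exact .inside ..
  | disjoint P Q _ _ h => exact .disjoint Q P _ _ fun X Y => (h Y X).symm
  | left _ _ _ _ hx hy hz => exact .right _ _ _ _ hx hy hz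
  | right _ _ _ _ hx hy hz => exact .left _ _ _ _ hx hy hz

theorem comp_left (F : LCtx) (h : Overlap D R E S) : Overlap (F.comp D) R (F.comp E) S := by
  cases h with
  | inside => rw [← LCtx.comp_assoc]; exact .inside ..
  | outside => rw [← LCtx.comp_assoc]; exact .outside ..
  | disjoint P Q _ _ h =>
    exact .disjoint (fun Y => F.comp (P Y)) (fun X => F.comp (Q X)) _ _ fun X Y => by simp [h X Y]
  | left _ _ _ _ hx hy hz => simp only [← LCtx.comp_assoc]; exact .left _ _ _ _ hx hy hz
  | right _ _ _ _ hx hy hz => simp only [← LCtx.comp_assoc]; exact .right _ _ _ _ hx hy hz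

theorem of_hole {a b : LHedge} (h : a ++ (R ++ b) = E.plug S) : Overlap (.hole a b) R E S := by
  obtain ⟨E, rfl, rfl⟩ | ⟨E, rfl, hE⟩ | ⟨c, x, y, d, hx, hy, rfl, rfl, rfl, hd⟩ :=
    LCtx.append_eq_plug h
  · exact .disjoint (fun Y => .hole (E.plug Y) b) (fun X => (LCtx.hole [] (X ++ b)).comp E) R S
      (by simp)
  · obtain ⟨E, rfl, rfl⟩ | ⟨E, rfl, rfl⟩ | ⟨c, x, y, d, hx, hy, rfl, rfl, rfl, rfl⟩ :=
      LCtx.append_eq_plug hE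
    · simpa [← LCtx.comp_assoc, LCtx.comp] using outside (.hole a b) E S
    · simpa [← LCtx.comp_assoc, LCtx.comp] using
        disjoint (fun Y => .hole a (E.plug Y)) (fun X => (LCtx.hole (a ++ X) []).comp E) R S
          (by simp)
    · obtain rfl | hc := eq_or_ne c []
      · simpa [LCtx.comp] using inside (.hole [] y) (.hole a d) x
      · simpa [LCtx.comp] using right (.hole a d) c x y hc hx hy
  · obtain ⟨z, rfl, rfl⟩ | ⟨z, rfl, rfl⟩ := List.append_eq_append_iff.1 hd
    · simpa [LCtx.comp] using inside (.hole x z) (.hole c d) R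
    · obtain rfl | hz := eq_or_ne z []
      · simpa [LCtx.comp] using inside (.hole x []) (.hole c b) y
      · simpa [LCtx.comp] using left (.hole c b) x y z hx hy hz

theorem brk_brk_append (a b c : LHedge) (l k : ℕ) :
    Overlap (.brk l D a (b ++ .node k (E.plug S) :: c)) R
      (.brk k E (a ++ .node l (D.plug R) :: b) c) S :=
  .disjoint (fun Y => .brk l D a (b ++ .node k (E.plug Y) :: c))
    (fun X => .brk k E (a ++ .node l (D.plug X) :: b) c) R S (by simp)

theorem of_plug_eq_plug (h : D.plug R = E.plug S) : Overlap D R E S := by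
  induction D generalizing E with
  | hole a b => exact of_hole (by simpa using h)
  | brk l D a b ih =>
    cases E with
    | hole c d => exact (of_hole (by simpa using h.symm)).symm
    | brk k E c d =>
      simp only [LCtx.plug, List.append_eq_append_iff, List.cons_eq_append_iff, List.cons.injEq,
        LTree.node.injEq] at h
      obtain ⟨u, rfl, ⟨rfl, ⟨rfl, h⟩, rfl⟩ | ⟨v, rfl, rfl⟩⟩ |
        ⟨u, rfl, ⟨rfl, ⟨rfl, h⟩, rfl⟩ | ⟨v, rfl, rfl⟩⟩ := h
      · simpa [LCtx.comp] using (ih h.symm).comp_left (.brk _ (.hole [] []) a _)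
      · exact brk_brk_append ..
      · simpa [LCtx.comp] using (ih h).comp_left (.brk l (.hole [] []) c b)
      · exact (brk_brk_append ..).symm

end Overlap

/-- `E` is an interpolant of the segment `X` of the sequent `D.plug X ⇒ C`. -/
structure IsInterpolant (D : LCtx) (X : LHedge) (C E : LTy) : Prop where
  left : LP X E
  right : LP (D.plug [.leaf E]) C
  labels_le_segment : E.labels ≤ LHedge.labels X
  labels_le_rest : E.labels ≤ D.labels + C.labels

/-- Every nonempty segment of `H ⇒ C` has an interpolant. -/
def Interpolable (H : LHedge) (C : LTy) : Prop :=
  ∀ ⦃D X⦄, H = LCtx.plug D X → X ≠ [] → ∃ E, IsInterpolant D X C E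

theorem LCtx.labels_eq_of_plug_eq_plug {D E : LCtx} {X Y : LHedge} (h : D.plug X = E.plug Y) :
    D.labels + LHedge.labels X = E.labels + LHedge.labels Y := by
  simpa using congrArg LHedge.labels h

theorem IsInterpolant.mul {D₁ D₂ D : LCtx} {X Y : LHedge} {C₁ C₂ C E₁ E₂ : LTy}
    (h₁ : IsInterpolant D₁ X C₁ E₁) (h₂ : IsInterpolant D₂ Y C₂ E₂)
    (right : LP (D.plug [.leaf E₁, .leaf E₂]) C)
    (hlabels : D₁.labels + C₁.labels + (D₂.labels + C₂.labels) ≤ D.labels + C.labels) :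
    IsInterpolant D (X ++ Y) C (.mul E₁ E₂) where
  left := .mulR _ _ _ _ h₁.left h₂.left
  right := .mulL _ _ _ _ right
  labels_le_segment := by
    simpa using add_le_add h₁.labels_le_segment h₂.labels_le_segment
  labels_le_rest := (add_le_add h₁.labels_le_rest h₂.labels_le_rest).trans hlabels

namespace Interpolable

section LeftRule

variable {D : LCtx} {R R' : LHedge} {C : LTy}

theorem exists_inside {F : LCtx} (rule : ∀ D C, LP (LCtx.plug D R') C → LP (LCtx.plug D R) C)
    (hlabels : LHedge.labels R' ≤ LHedge.labels R)
    (h : Interpolable ((F.comp D).plug R') C) (hR' : R' ≠ []) :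
    ∃ E, IsInterpolant F (D.plug R) C E := by
  obtain ⟨E, hE⟩ := h (LCtx.plug_comp ..) fun h => hR' (LCtx.eq_nil_of_plug_eq_nil h)
  refine ⟨E, rule _ _ hE.left, hE.right, hE.labels_le_segment.trans ?_, hE.labels_le_rest⟩
  simpa using hlabels

theorem exists_disjoint {P Q : LHedge → LCtx} {X : LHedge}
    (rule : ∀ D C, LP (LCtx.plug D R') C → LP (LCtx.plug D R) C)
    (hlabels : LHedge.labels R' ≤ LHedge.labels R)
    (hPQ : ∀ Y Z, (P Z).plug Y = (Q Y).plug Z) (h : Interpolable ((P X).plug R') C)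
    (hX : X ≠ []) : ∃ E, IsInterpolant (Q R) X C E := by
  obtain ⟨E, hE⟩ := h (hPQ R' X) hX
  refine ⟨E, hE.left, hPQ .. ▸ rule _ _ (hPQ .. ▸ hE.right), hE.labels_le_segment,
    hE.labels_le_rest.trans ?_⟩
  have hR := LCtx.labels_eq_of_plug_eq_plug (hPQ R [])
  have hR' := LCtx.labels_eq_of_plug_eq_plug (hPQ R' [])
  simp only [LHedge.labels_nil, add_zero] at hR hR'
  rw [← hR, ← hR']
  gcongr

/-- A left rule whose principal part is a single tree `t` preserves interpolation; only the
segments strictly inside `t` depend on the rule. -/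
theorem of_leftRule {t : LTree} (rule : ∀ D C, LP (LCtx.plug D R') C → LP (LCtx.plug D R) C)
    (hlabels : LHedge.labels R' ≤ LHedge.labels R)
    (ht : R = [t]) (hR' : R' ≠ [])
    (nested : ∀ l F X, t = .node l (LCtx.plug F X) → X ≠ [] →
      ∃ E, IsInterpolant (D.comp (.brk l F [] [])) X C E)
    (h : Interpolable (D.plug R') C) : Interpolable (D.plug R) C := by
  intro F X hFX hX
  cases Overlap.of_plug_eq_plug hFX with
  | inside => exact exists_inside rule hlabels h hR'
  | disjoint P Q _ _ hPQ => exact exists_disjoint rule hlabels hPQ h hX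
  | outside =>
    obtain ⟨rfl, rfl⟩ | ⟨l, F, rfl, rfl⟩ := LCtx.singleton_eq_plug ht.symm hX
    · simpa using exists_inside (F := D) (D := .hole [] []) rule hlabels (by simpa using h) hR'
    · exact nested _ _ _ rfl hX
  | left _ _ y z _ hy hz | right _ y z _ hy hz => cases y <;> cases z <;> simp_all

end LeftRule

section Division

variable {D F : LCtx} {G x y z : LHedge} {A B C E : LTy}

theorem exists_append_ldiv (hxy : LP (x ++ y) A) (hA : Interpolable (x ++ y) A)
    (hE : IsInterpolant F (.leaf B :: z) C E) :
    ∃ E, IsInterpolant (F.comp (.hole x [])) (y ++ .leaf (.ldiv A B) :: z) C E := by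
  have hE_left := hE.labels_le_segment
  have hE_right := hE.labels_le_rest
  obtain rfl | hx := eq_or_ne x []
  · refine ⟨E, ?_, by simpa using hE.right, ?_, by simpa using hE_right⟩
    · simpa using LP.ldivL y (.hole [] z) A B E hxy (by simpa using hE.left)
    · simp only [Multiset.le_iff_count, LHedge.labels_cons, LHedge.labels_append,
        LTree.labels_leaf, LTy.labels, Multiset.count_add] at *
      grind
  · obtain ⟨E', hE'⟩ := hA (D := .hole [] y) (X := x) (by simp) hx
    have hE'_left := hE'.labels_le_segment
    have hE'_right := hE'.labels_le_rest
    refine ⟨.ldiv E' E, .ldivR _ _ _ ?_, ?_, ?_, ?_⟩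
    · simpa using LP.ldivL (.leaf E' :: y) (.hole [] z) A B E (by simpa using hE'.right)
        (by simpa using hE.left)
    · simpa using LP.ldivL x F E' E C hE'.left hE.right
    all_goals
      simp only [Multiset.le_iff_count, LHedge.labels_cons, LHedge.labels_append,
        LTree.labels_leaf, LTy.labels, LCtx.labels_comp, LCtx.labels, LHedge.labels_nil,
        Multiset.count_add, Multiset.count_zero] at *
      grind

theorem exists_append_rdiv (hyz : LP (y ++ z) A) (hA : Interpolable (y ++ z) A)
    (hE : IsInterpolant F (x ++ [.leaf B]) C E) :
    ∃ E, IsInterpolant (F.comp (.hole [] z)) (x ++ .leaf (.rdiv B A) :: y) C E := by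
  have hE_left := hE.labels_le_segment
  have hE_right := hE.labels_le_rest
  obtain rfl | hz := eq_or_ne z []
  · refine ⟨E, ?_, by simpa using hE.right, ?_, by simpa using hE_right⟩
    · simpa using LP.rdivL y (.hole x []) A B E (by simpa using hyz) (by simpa using hE.left)
    · simp only [Multiset.le_iff_count, LHedge.labels_cons, LHedge.labels_append,
        LHedge.labels_nil, LTree.labels_leaf, LTy.labels, Multiset.count_add,
        Multiset.count_zero] at *
      grind
  · obtain ⟨E', hE'⟩ := hA (D := .hole y []) (X := z) (by simp) hz
    have hE'_left := hE'.labels_le_segment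
    have hE'_right := hE'.labels_le_rest
    refine ⟨.rdiv E E', .rdivR _ _ _ ?_, ?_, ?_, ?_⟩
    · simpa using LP.rdivL (y ++ [.leaf E']) (.hole x []) A B E (by simpa using hE'.right)
        (by simpa using hE.left)
    · simpa using LP.rdivL z F E' E C hE'.left hE.right
    all_goals
      simp only [Multiset.le_iff_count, LHedge.labels_cons, LHedge.labels_append,
        LTree.labels_leaf, LTy.labels, LCtx.labels_comp, LCtx.labels, LHedge.labels_nil,
        Multiset.count_add, Multiset.count_zero] at *
      grind

theorem exists_outside_ldiv {X : LHedge} (hFX : G ++ [.leaf (.ldiv A B)] = F.plug X)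
    (hX : X ≠ []) (hG : LP G A) (hA : Interpolable G A)
    (hC : Interpolable (D.plug [.leaf B]) C) (hDC : LP (D.plug [.leaf B]) C) :
    ∃ E, IsInterpolant (D.comp F) X C E := by
  obtain ⟨E, hE⟩ := hC rfl (by simp)
  obtain ⟨F, rfl, rfl⟩ | ⟨F, rfl, hF⟩ | ⟨c, x, y, d, _, hy, rfl, rfl, rfl, hyd⟩ :=
    LCtx.append_eq_plug hFX
  · obtain ⟨E, hE⟩ := hA rfl hX
    refine ⟨E, hE.left, ?_, hE.labels_le_segment, hE.labels_le_rest.trans ?_⟩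
    · simpa using LP.ldivL (F.plug [.leaf E]) D A B C hE.right hDC
    · simp [Multiset.le_iff_count]; omega
  · obtain ⟨rfl, rfl⟩ | ⟨_, _, _, hF⟩ := LCtx.singleton_eq_plug hF hX
    · simpa [LCtx.comp] using exists_append_ldiv (x := G) (y := []) (by simpa) (by simpa) hE
    · cases hF
  · obtain ⟨rfl, rfl⟩ : y = [.leaf (.ldiv A B)] ∧ d = [] := by cases y <;> simp_all
    exact exists_append_ldiv hG hA hE

theorem exists_outside_rdiv {X : LHedge} (hFX : .leaf (.rdiv B A) :: G = F.plug X)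
    (hX : X ≠ []) (hG : LP G A) (hA : Interpolable G A)
    (hC : Interpolable (D.plug [.leaf B]) C) (hDC : LP (D.plug [.leaf B]) C) :
    ∃ E, IsInterpolant (D.comp F) X C E := by
  obtain ⟨E, hE⟩ := hC rfl (by simp)
  obtain ⟨F, rfl, hF⟩ | ⟨F, rfl, rfl⟩ | ⟨c, x, y, d, hx, _, rfl, rfl, hcx, rfl⟩ :=
    LCtx.append_eq_plug (Y := [_]) hFX
  · obtain ⟨rfl, rfl⟩ | ⟨_, _, _, hF⟩ := LCtx.singleton_eq_plug hF hX
    · simpa [LCtx.comp] using exists_append_rdiv (x := []) (y := []) (z := G) hG hA hE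
    · cases hF
  · obtain ⟨E, hE⟩ := hA rfl hX
    refine ⟨E, hE.left, ?_, hE.labels_le_segment, hE.labels_le_rest.trans ?_⟩
    · simpa using LP.rdivL (F.plug [.leaf E]) D A B C hE.right hDC
    · simp [Multiset.le_iff_count]; omega
  · obtain ⟨rfl, rfl⟩ : c = [] ∧ x = [.leaf (.rdiv B A)] := by cases c <;> simp_all
    exact exists_append_rdiv (x := []) hG hA hE

theorem of_ldivL (hG : LP G A) (hA : Interpolable G A) (hDC : LP (D.plug [.leaf B]) C)
    (hC : Interpolable (D.plug [.leaf B]) C) :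
    Interpolable (D.plug (G ++ [.leaf (.ldiv A B)])) C := by
  have rule D C := LP.ldivL G D A B C hG
  have hlabels : LHedge.labels [.leaf B] ≤ LHedge.labels (G ++ [.leaf (.ldiv A B)]) := by
    simp [Multiset.le_iff_count]; omega
  intro F X hFX hX
  generalize hR : G ++ [LTree.leaf (.ldiv A B)] = R at *
  cases Overlap.of_plug_eq_plug hFX with
  | inside => exact exists_inside rule hlabels hC (by simp)
  | disjoint P Q _ _ hPQ => exact exists_disjoint rule hlabels hPQ hC hX
  | outside => exact exists_outside_ldiv hR hX hG hA hC hDC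
  | left F x y z hx hy hz =>
    obtain rfl | ⟨z, t, rfl⟩ := z.eq_nil_or_concat'
    · contradiction
    obtain ⟨rfl, rfl⟩ : G = y ++ z ∧ _ = t := by simpa [← List.append_assoc] using hR
    obtain ⟨E₁, h₁⟩ := hC (D := F.comp (.hole [] [.leaf B])) (X := x) (by simp) hx
    obtain ⟨E₂, h₂⟩ := hA (D := .hole [] z) (X := y) (by simp) hy
    refine ⟨_, h₁.mul h₂ ?_ ?_⟩
    · simpa using LP.ldivL (.leaf E₂ :: z) (F.comp (.hole [.leaf E₁] [])) A B C
        (by simpa using h₂.right) (by simpa using h₁.right)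
    · simp [Multiset.le_iff_count]; omega
  | right F x y z hx hy hz =>
    obtain rfl | ⟨y, t, rfl⟩ := y.eq_nil_or_concat'
    · contradiction
    obtain ⟨rfl, rfl⟩ : G = x ++ y ∧ _ = t := by simpa [← List.append_assoc] using hR
    obtain ⟨E, hE⟩ := hC (D := F) (X := .leaf B :: z) (by simp) (by simp)
    simpa using exists_append_ldiv hG hA hE

theorem of_rdivL (hG : LP G A) (hA : Interpolable G A) (hDC : LP (D.plug [.leaf B]) C)
    (hC : Interpolable (D.plug [.leaf B]) C) :
    Interpolable (D.plug (.leaf (.rdiv B A) :: G)) C := by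
  have rule D C := LP.rdivL G D A B C hG
  have hlabels : LHedge.labels [.leaf B] ≤ LHedge.labels (.leaf (.rdiv B A) :: G) := by
    simp [Multiset.le_iff_count]; omega
  intro F X hFX hX
  generalize hR : LTree.leaf (.rdiv B A) :: G = R at *
  cases Overlap.of_plug_eq_plug hFX with
  | inside => exact exists_inside rule hlabels hC (by simp)
  | disjoint P Q _ _ hPQ => exact exists_disjoint rule hlabels hPQ hC hX
  | outside => exact exists_outside_rdiv hR hX hG hA hC hDC
  | left F x y z hx hy hz =>
    obtain _ | ⟨t, y⟩ := y
    · contradiction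
    obtain ⟨rfl, rfl⟩ : _ = t ∧ G = y ++ z := by simpa using hR
    obtain ⟨E, hE⟩ := hC (D := F) (X := x ++ [.leaf B]) (by simp) (by simp)
    simpa using exists_append_rdiv hG hA hE
  | right F x y z hx hy hz =>
    obtain _ | ⟨t, x⟩ := x
    · contradiction
    obtain ⟨rfl, rfl⟩ : _ = t ∧ G = x ++ y := by simpa using hR
    obtain ⟨E₁, h₁⟩ := hA (D := .hole x []) (X := y) (by simp) hy
    obtain ⟨E₂, h₂⟩ := hC (D := F.comp (.hole [.leaf B] [])) (X := z) (by simp) hz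
    refine ⟨_, h₁.mul h₂ ?_ ?_⟩
    · simpa using LP.rdivL (x ++ [LTree.leaf E₁]) (F.comp (.hole [] [.leaf E₂])) A B C
        (by simpa using h₁.right) (by simpa using h₂.right)
    · simp [Multiset.le_iff_count]; omega

end Division

theorem of_mulR {G H : LHedge} {A B : LTy} (hG : LP G A) (hH : LP H B) (hA : Interpolable G A)
    (hB : Interpolable H B) : Interpolable (G ++ H) (.mul A B) := by
  intro D X hDX hX
  obtain ⟨D, rfl, rfl⟩ | ⟨D, rfl, rfl⟩ | ⟨c, x, y, d, hx, hy, rfl, rfl, rfl, rfl⟩ :=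
    LCtx.append_eq_plug hDX
  · obtain ⟨E, hE⟩ := hA rfl hX
    refine ⟨E, hE.left, ?_, hE.labels_le_segment, hE.labels_le_rest.trans ?_⟩
    · simpa using LP.mulR _ _ _ _ hE.right hH
    · simp [Multiset.le_iff_count]; omega
  · obtain ⟨E, hE⟩ := hB rfl hX
    refine ⟨E, hE.left, ?_, hE.labels_le_segment, hE.labels_le_rest.trans ?_⟩
    · simpa using LP.mulR _ _ _ _ hG hE.right
    · simp [Multiset.le_iff_count]; omega
  · obtain ⟨E₁, h₁⟩ := hA (D := .hole c []) (X := x) (by simp) hx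
    obtain ⟨E₂, h₂⟩ := hB (D := .hole [] d) (X := y) (by simp) hy
    refine ⟨_, h₁.mul h₂ ?_ ?_⟩
    · simpa using LP.mulR _ _ _ _ h₁.right h₂.right
    · simp [Multiset.le_iff_count]; omega

theorem of_ldivR {G : LHedge} {A B : LTy} (h : Interpolable (.leaf A :: G) B) :
    Interpolable G (.ldiv A B) := by
  rintro D X rfl hX
  obtain ⟨E, hE⟩ := h (D := (LCtx.hole [.leaf A] []).comp D) (X := X) (by simp) hX
  refine ⟨E, hE.left, .ldivR _ _ _ (by simpa using hE.right), hE.labels_le_segment, ?_⟩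
  simpa [add_comm, add_left_comm, add_assoc] using hE.labels_le_rest

theorem of_rdivR {G : LHedge} {A B : LTy} (h : Interpolable (G ++ [.leaf A]) B) :
    Interpolable G (.rdiv B A) := by
  rintro D X rfl hX
  obtain ⟨E, hE⟩ := h (D := (LCtx.hole [] [.leaf A]).comp D) (X := X) (by simp) hX
  refine ⟨E, hE.left, .rdivR _ _ _ (by simpa using hE.right), hE.labels_le_segment, ?_⟩
  simpa [add_comm, add_left_comm, add_assoc] using hE.labels_le_rest

theorem of_boxR {G : LHedge} {l : ℕ} {A : LTy} (h : Interpolable [.node l G] A) :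
    Interpolable G (.box l A) := by
  rintro D X rfl hX
  obtain ⟨E, hE⟩ := h (D := .brk l D [] []) (X := X) (by simp) hX
  refine ⟨E, hE.left, .boxR _ _ _ (by simpa using hE.right), hE.labels_le_segment, ?_⟩
  simpa [add_comm, add_left_comm, add_assoc] using hE.labels_le_rest

theorem of_diaR {G : LHedge} {l : ℕ} {A : LTy} (hG : LP G A) (hA : Interpolable G A) :
    Interpolable [.node l G] (.dia l A) := by
  intro D X hDX hX
  obtain ⟨rfl, rfl⟩ | ⟨l, D, rfl, hD⟩ := LCtx.singleton_eq_plug hDX hX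
  · obtain rfl | hne := eq_or_ne G []
    · exact ⟨.diaOne l, .diaOneR l, by simpa using LP.diaOneL (.hole [] []) l _ (.diaR _ _ _ hG),
        by simp, by simp⟩
    obtain ⟨E, hE⟩ := hA (D := .hole [] []) (by simp) hne
    refine ⟨.dia l E, .diaR _ _ _ hE.left, ?_, ?_, ?_⟩
    · exact .diaL (.hole [] []) _ _ _ (.diaR _ _ _ (by simpa using hE.right))
    · simpa using hE.labels_le_segment
    · simpa using hE.labels_le_rest
  · obtain ⟨rfl, rfl⟩ : _ = l ∧ G = _ := by simpa using hD
    obtain ⟨E, hE⟩ := hA rfl hX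
    refine ⟨E, hE.left, .diaR _ _ _ hE.right, hE.labels_le_segment, hE.labels_le_rest.trans ?_⟩
    simp [Multiset.le_iff_count, -Multiset.singleton_add]; omega

theorem of_boxL {D : LCtx} {l : ℕ} {A C : LTy} (hC : Interpolable (D.plug [.leaf A]) C) :
    Interpolable (D.plug [.node l [.leaf (.box l A)]]) C := by
  have hlabels : LHedge.labels [.leaf A] ≤ LHedge.labels [.node l [.leaf (.box l A)]] := by
    simp [Multiset.le_iff_count, -Multiset.singleton_add]; omega
  refine of_leftRule (fun D C => LP.boxL D l A C) hlabels rfl (by simp) ?_ hC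
  intro k F X hkF hX
  obtain ⟨rfl, hF⟩ : l = k ∧ _ = F.plug X := by simpa using hkF
  obtain ⟨rfl, rfl⟩ | ⟨_, _, _, ht⟩ := LCtx.singleton_eq_plug hF hX
  · obtain ⟨E, hE⟩ := hC rfl (by simp)
    refine ⟨.box l E, .boxR _ _ _ (LP.boxL (.hole [] []) _ _ _ hE.left), ?_, ?_, ?_⟩
    · simpa using LP.boxL _ _ _ _ hE.right
    · simpa using hE.labels_le_segment
    · have := hE.labels_le_rest
      simpa [add_assoc, add_left_comm] using this
  · cases ht

end Interpolable

theorem LP.interpolable {H : LHedge} {C : LTy} (h : LP H C) : Interpolable H C := by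
  induction h with
  | id p l =>
    intro D X hDX hX
    obtain ⟨rfl, rfl⟩ | ⟨_, _, _, ht⟩ := LCtx.singleton_eq_plug hDX hX
    · exact ⟨.prim p l, .id p l, .id p l, by simp, by simp⟩
    · cases ht
  | ldivL _ _ _ _ _ hG hC ihG ihC => exact .of_ldivL hG ihG hC ihC
  | rdivL _ _ _ _ _ hG hC ihG ihC => exact .of_rdivL hG ihG hC ihC
  | mulR _ _ _ _ hG hH ihG ihH => exact .of_mulR hG hH ihG ihH
  | diaR _ _ _ hG ihG => exact .of_diaR hG ihG
  | boxL _ _ _ _ _ ih => exact .of_boxL ih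
  | mulL _ _ _ _ _ ih =>
    exact .of_leftRule (fun D C => mulL D _ _ C) (by simp) rfl (by simp) nofun ih
  | diaL _ _ _ _ _ ih =>
    exact .of_leftRule (fun D C => diaL D _ _ C) (by simp) rfl (by simp) nofun ih
  | diaOneL _ _ _ _ ih =>
    exact .of_leftRule (fun D C => diaOneL D _ C) (by simp) rfl (by simp) nofun ih
  | ldivR _ _ _ _ ih => exact .of_ldivR ih
  | rdivR _ _ _ _ ih => exact .of_rdivR ih
  | boxR _ _ _ _ ih => exact .of_boxR ih
  | diaOneR l =>
    intro D X hDX hX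
    obtain ⟨rfl, rfl⟩ | ⟨_, D, rfl, hlD⟩ := LCtx.singleton_eq_plug hDX hX
    · exact ⟨.diaOne l, .diaOneR l, .diaOneL (.hole [] []) _ _ (.diaOneR l), by simp, by simp⟩
    · obtain ⟨rfl, hD⟩ : l = _ ∧ [] = D.plug X := by simpa using hlD
      exact (hX (LCtx.eq_nil_of_plug_eq_nil hD.symm)).elim

/-! ### Group valuations -/

section Valuation

variable {K : Type*} [Group K] (v : Label → K)

/-- The value of a type in a group, given the values of the labels. The modalities `◇` and `□↓` act
as multiplication by the value of their label and by its inverse. -/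
@[simp]
def LTy.val : LTy → K
  | .prim p l => v (.prim p l)
  | .ldiv A B => A.val⁻¹ * B.val
  | .rdiv B A => B.val * A.val⁻¹
  | .mul A B => A.val * B.val
  | .dia l A => v (.modality l) * A.val
  | .box l A => (v (.modality l))⁻¹ * A.val
  | .diaOne l => v (.modality l)

/-- The value of a type tree; a bracket is interpreted like `◇`. -/
def LTree.val : LTree → K
  | .leaf A => A.val v
  | .node l H => v (.modality l) * (H.map LTree.val).prod

/-- The value of a hedge, the product of the values of its trees. -/
def LHedge.val (H : LHedge) : K := (H.map (LTree.val v)).prod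

@[simp]
theorem LHedge.val_nil : LHedge.val v [] = 1 := rfl

@[simp]
theorem LHedge.val_cons (t : LTree) (H : LHedge) :
    LHedge.val v (t :: H) = t.val v * LHedge.val v H := by
  simp [val]

@[simp]
theorem LHedge.val_append (H K : LHedge) :
    LHedge.val v (H ++ K) = LHedge.val v H * LHedge.val v K := by
  simp [val]

@[simp]
theorem LTree.val_leaf (A : LTy) : (LTree.leaf A).val v = A.val v := by
  rw [LTree.val]

@[simp]
theorem LTree.val_node (l : ℕ) (H : LHedge) :
    (LTree.node l H).val v = v (.modality l) * LHedge.val v H := by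
  rw [LTree.val, LHedge.val]

theorem LCtx.val_plug_congr (D : LCtx) {X Y : LHedge} (h : LHedge.val v X = LHedge.val v Y) :
    LHedge.val v (D.plug X) = LHedge.val v (D.plug Y) := by
  induction D with
  | hole a b => simp [h]
  | brk l D a b ih => simp [ih]

theorem LP.val_eq {H : LHedge} {C : LTy} (h : LP H C) : LHedge.val v H = C.val v := by
  induction h with
  | id | diaOneR => simp
  | ldivR _ _ _ _ ih | rdivR _ _ _ _ ih | boxR _ _ _ _ ih => simp [← ih]
  | mulR _ _ _ _ _ _ ihA ihB => simp [ihA, ihB]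
  | diaR _ _ _ _ ih => simp [ih]
  | ldivL _ D _ _ _ _ _ ihA ihC | rdivL _ D _ _ _ _ _ ihA ihC =>
    exact (D.val_plug_congr v (by simp [ihA])).trans ihC
  | mulL D _ _ _ _ ih | diaL D _ _ _ _ ih | boxL D _ _ _ _ ih | diaOneL D _ _ _ ih =>
    exact (D.val_plug_congr v (by simp)).trans ih

variable {v}

theorem LTy.val_eq_pow_count {p : Label} (hp : (v p)⁻¹ = v p) {A : LTy}
    (hA : ∀ k ∈ A.labels, k ≠ p → v k = 1) : A.val v = v p ^ A.labels.count p := by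
  have single (k : Label) (hk : k ≠ p → v k = 1) :
      v k = v p ^ ({k} : Multiset Label).count p := by
    obtain rfl | hkp := eq_or_ne k p
    · simp
    · simp [hk hkp, hkp.symm]
  induction A with
  | prim | diaOne => exact single _ (hA _ (by simp))
  | ldiv A B ihA ihB | rdiv B A ihB ihA | mul A B ihA ihB =>
    simp only [labels, Multiset.mem_add] at hA
    simp [ihA fun k hk => hA k (by simp [hk]), ihB fun k hk => hA k (by simp [hk]), pow_add,
      ← inv_pow, hp]
  | dia l A ih =>
    simp only [labels, Multiset.mem_add] at hA
    rw [val, labels, Multiset.count_add, pow_add, ← single _ (hA _ (by simp)),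
      ih fun k hk => hA k (by simp [hk])]
  | box l A ih =>
    simp only [labels, Multiset.mem_add] at hA
    rw [val, labels, Multiset.count_add, pow_add, single _ (hA _ (by simp)), ← inv_pow, hp,
      ih fun k hk => hA k (by simp [hk])]

end Valuation

/-! ### Bracket-free labelled sequents -/

/-- The number of occurrences of the label `k` in a sequence of types. -/
def labelCount (k : Label) (L : List LTy) : ℕ := (LHedge.labels (L.map .leaf)).count k

section LabelCount

variable {k : Label}

theorem count_labels_map_leaf (L : List LTy) :
    (LHedge.labels (L.map .leaf)).count k = labelCount k L := rfl

@[simp]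
theorem labelCount_nil : labelCount k [] = 0 := rfl

@[simp]
theorem labelCount_append (X Y : List LTy) :
    labelCount k (X ++ Y) = labelCount k X + labelCount k Y := by
  simp [labelCount]

theorem labelCount_cons (A : LTy) (L : List LTy) :
    labelCount k (A :: L) = A.labels.count k + labelCount k L := by
  simp [labelCount]

theorem labelCount_singleton (A : LTy) : labelCount k [A] = A.labels.count k := by
  simp [labelCount_cons]

theorem LP.even_labelCount {L : List LTy} {C : LTy} (h : LP (L.map .leaf) C) (k : Label) :
    Even (labelCount k (L ++ [C])) := by
  simpa [labelCount] using h.even_count k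

theorem LHedge.val_leaves_eq_pow {K : Type*} [Group K] {v : Label → K} (hk : (v k)⁻¹ = v k)
    {L : List LTy} (hL : ∀ j ≠ k, v j = 1 ∨ labelCount j L = 0) :
    LHedge.val v (L.map .leaf) = v k ^ labelCount k L := by
  induction L with
  | nil => simp
  | cons A L ih =>
    simp only [labelCount_cons, Nat.add_eq_zero_iff] at hL
    have hA : ∀ j ∈ A.labels, j ≠ k → v j = 1 := fun j hj hjk =>
      (hL j hjk).resolve_right fun h => Multiset.count_ne_zero.2 hj h.1
    simp [labelCount_cons, pow_add, A.val_eq_pow_count hk hA,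
      ih fun j hj => (hL j hj).imp_right And.right]

/-- The value of the sequent in `S₃` at two non-commuting transpositions shows that the two
occurrences of `p` do not cross those of `q`. -/
theorem LP.not_crossing {X₁ X₂ X₃ X₄ : List LTy} {C : LTy} {p q : Label}
    (h : LP ((X₁ ++ X₂ ++ X₃ ++ X₄).map .leaf) C)
    (p₁ : labelCount p X₁ = 1) (p₂ : labelCount p X₂ = 0) (p₃ : labelCount p X₃ = 1)
    (p₄ : labelCount p (X₄ ++ [C]) = 0)
    (q₁ : labelCount q X₁ = 0) (q₂ : labelCount q X₂ = 1) (q₃ : labelCount q X₃ = 0)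
    (q₄ : labelCount q (X₄ ++ [C]) = 1) : False := by
  have hpq : p ≠ q := by rintro rfl; omega
  let a : Equiv.Perm (Fin 3) := .swap 0 1
  let b : Equiv.Perm (Fin 3) := .swap 1 2
  let v : Label → Equiv.Perm (Fin 3) := fun k => if k = p then a else if k = q then b else 1
  have hvp : v p = a := by simp [v]
  have hvq : v q = b := by simp [v, hpq.symm]
  have val_p (X : List LTy) (hX : labelCount q X = 0) :
      LHedge.val v (X.map .leaf) = a ^ labelCount p X := by
    rw [← hvp]
    refine LHedge.val_leaves_eq_pow (by rw [hvp]; decide) fun j hj => ?_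
    obtain rfl | hjq := eq_or_ne j q
    · exact .inr hX
    · simp [v, hj, hjq]
  have val_q (X : List LTy) (hX : labelCount p X = 0) :
      LHedge.val v (X.map .leaf) = b ^ labelCount q X := by
    rw [← hvq]
    refine LHedge.val_leaves_eq_pow (by rw [hvq]; decide) fun j hj => ?_
    obtain rfl | hjp := eq_or_ne j p
    · exact .inr hX
    · simp [v, hj, hjp]
  simp only [labelCount_append, Nat.add_eq_zero_iff] at p₄ q₄
  have hval := h.val_eq v
  have hC : C.val v = b ^ labelCount q [C] := by simpa using val_q [C] p₄.2
  simp only [List.map_append, LHedge.val_append, val_p X₁ q₁, val_q X₂ p₂, val_p X₃ q₃,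
    val_q X₄ p₄.1, hC, p₁, q₂, p₃] at hval
  obtain ⟨h₄, h₅⟩ | ⟨h₄, h₅⟩ := Nat.add_eq_one_iff.1 q₄ <;>
    · rw [h₄, h₅] at hval
      revert hval
      decide

end LabelCount

/-! ### The binary reduction -/

/-- `A` may occur in the sequents of `S'_{B,m}`. -/
def Admissible (B : Finset ℕ) (m : ℕ) (A : PTy) : Prop :=
  A.guarded ∧ A.over B ∧ lenP A ≤ m

theorem PTy.guarded_dia {A : PTy} (hA : A ≠ .one) : (dia A).guarded ↔ A.guarded := by
  cases A <;> simp_all [guarded]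

theorem isGuardedClass_admissible (B : Finset ℕ) (m : ℕ) : IsGuardedClass (Admissible B m) where
  not_one h := h.1
  of_ldiv := by grind [Admissible, PTy.guarded, PTy.over, lenP]
  of_rdiv := by grind [Admissible, PTy.guarded, PTy.over, lenP]
  of_mul := by grind [Admissible, PTy.guarded, PTy.over, lenP]
  of_dia hA := by grind [Admissible, PTy.guarded_dia hA, PTy.over, lenP]
  of_box := by grind [Admissible, PTy.guarded, PTy.over, lenP]

/-- The total length that the labels in `s` contribute to a type. -/
def totalWeight (s : Multiset Label) : ℕ := (s.map Label.weight).sum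

@[simp]
theorem totalWeight_add (s t : Multiset Label) :
    totalWeight (s + t) = totalWeight s + totalWeight t := by
  simp [totalWeight]

@[simp]
theorem totalWeight_singleton (k : Label) : totalWeight {k} = k.weight := by
  simp [totalWeight]

theorem totalWeight_mono : Monotone totalWeight := fun s t h => by
  obtain ⟨u, rfl⟩ := Multiset.le_iff_exists_add.1 h
  simp

namespace LTy

theorem guarded_erase (A : LTy) : A.erase.guarded := by
  induction A with
  | prim | diaOne => trivial
  | ldiv _ _ ihA ihB | rdiv _ _ ihA ihB | mul _ _ ihA ihB => exact ⟨ihA, ihB⟩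
  | dia _ A ih => exact (PTy.guarded_dia (by cases A <;> simp)).2 ih
  | box _ _ ih => exact ih

theorem over_erase {B : Finset ℕ} {A : LTy} : A.erase.over B ↔ ∀ k ∈ A.labels, k.Over B := by
  induction A <;> simp_all [PTy.over, Label.Over, or_imp, forall_and, -Multiset.singleton_add]

theorem lenP_erase (A : LTy) : lenP A.erase = totalWeight A.labels := by
  induction A <;> simp_all [lenP, Label.weight, add_comm, -Multiset.singleton_add]

end LTy

theorem LP.erase_leaves {L : List LTy} {C : LTy} (h : LP (L.map .leaf) C) :
    PProvS1 ((L.map LTy.erase).map .leaf) C.erase := by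
  simpa [Function.comp_def] using h.erase

/-- The labels that occur in `L` an odd number of times, once each. In a provable sequent without
more than two occurrences of a label, these are the labels shared by the segment `L` and the rest of
the sequent. -/
def oddLabels (L : List LTy) : Multiset Label :=
  (LHedge.labels (L.map .leaf)).dedup.filter fun k => Odd (labelCount k L)

theorem count_oddLabels (k : Label) (L : List LTy) :
    (oddLabels L).count k = labelCount k L % 2 := by
  obtain hk | hk := Nat.mod_two_eq_zero_or_one (labelCount k L)
  · simp [oddLabels, Nat.odd_iff, hk]
  · have hmem : k ∈ LHedge.labels (L.map .leaf) := Multiset.count_ne_zero.1 <| by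
      rw [count_labels_map_leaf]
      omega
    simp [oddLabels, Nat.odd_iff, hk, hmem]

theorem oddLabels_singleton_le (A : LTy) : oddLabels [A] ≤ A.labels := by
  simp only [Multiset.le_iff_count, count_oddLabels, labelCount_singleton]
  exact fun k => Nat.mod_le _ _

/-- No label occurs more than twice in the sequent. -/
def IsThin (L : List LTy) (C : LTy) : Prop :=
  ∀ k, labelCount k (L ++ [C]) ≤ 2

namespace LP

variable {L : List LTy} {C : LTy}

theorem oddLabels_eq (h : LP (L.map .leaf) C) : oddLabels L = oddLabels [C] := by
  ext k
  have hk := h.even_labelCount k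
  simp only [Nat.even_iff, labelCount_append, count_oddLabels] at hk ⊢
  omega

/-- The first alternative holds if some label `p` occurs in both `X₁` and `X₃`, as no label crosses
`p`. -/
theorem oddLabels_four_point {X₁ X₂ X₃ X₄ : List LTy}
    (h : LP ((X₁ ++ X₂ ++ X₃ ++ X₄).map .leaf) C) (thin : IsThin (X₁ ++ X₂ ++ X₃ ++ X₄) C) :
    oddLabels (X₁ ++ X₂) + oddLabels (X₂ ++ X₃) ≤ oddLabels X₁ + oddLabels X₃ ∨
      oddLabels (X₁ ++ X₂) + oddLabels (X₂ ++ X₃) ≤ oddLabels (X₁ ++ X₂ ++ X₃) + oddLabels X₂ := by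
  have even := h.even_labelCount
  simp only [IsThin, labelCount_append] at thin even
  simp only [Multiset.le_iff_count, Multiset.count_add, count_oddLabels, labelCount_append]
  by_cases hp : ∃ p, labelCount p X₁ = 1 ∧ labelCount p X₃ = 1
  · refine .inl fun k => ?_
    obtain ⟨p, hp₁, hp₃⟩ := hp
    have thin_p := thin p
    have not_crossing : ¬ (labelCount k X₂ = 1 ∧ labelCount k X₄ + labelCount k [C] = 1) := by
      rintro ⟨hk₂, hk₄⟩
      have thin_k := thin k
      exact h.not_crossing (p := p) (q := k) hp₁ (by omega) hp₃ (by rw [labelCount_append]; omega)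
        (by grind) hk₂ (by grind) (by rwa [labelCount_append])
    have thin_k := thin k
    have even_k := even k
    grind
  · refine .inr fun k => ?_
    have not_both : ¬ (labelCount k X₁ = 1 ∧ labelCount k X₃ = 1) := fun hk => hp ⟨k, hk⟩
    have thin_k := thin k
    grind

theorem exists_adjacent_pair {m : ℕ} (h : LP (L.map .leaf) C) (thin : IsThin L C)
    (hlen : 2 ≤ L.length) (hL : ∀ A ∈ L, totalWeight (oddLabels [A]) ≤ m)
    (hC : totalWeight (oddLabels [C]) ≤ m) :
    ∃ X a b Y, L = X ++ [a, b] ++ Y ∧ totalWeight (oddLabels [a, b]) ≤ m := by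
  by_contra! no_pair
  have increasing (P a b Y) (hP : L = P ++ [a, b] ++ Y) :
      totalWeight (oddLabels (P ++ [a])) < totalWeight (oddLabels (P ++ [a, b])) ∧
        m < totalWeight (oddLabels (P ++ [a, b])) := by
    induction P using List.reverseRecOn generalizing a b Y with
    | nil =>
      have hab := no_pair [] a b Y hP
      exact ⟨(hL a (by simp [hP])).trans_lt hab, hab⟩
    | append_singleton P c ih =>
      have ⟨hlt, hgt⟩ := ih c a (b :: Y) (by simp [hP])
      have hab := no_pair (P ++ [c]) a b Y hP
      have ha := hL a (by simp [hP])
      have hb := hL b (by simp [hP])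
      have hP' : L = P ++ [c] ++ [a] ++ [b] ++ Y := by simp [hP]
      have four_point := oddLabels_four_point (hP' ▸ h) (hP' ▸ thin)
      have four_point_weight := four_point.imp (totalWeight_mono ·) (totalWeight_mono ·)
      simp only [totalWeight_add, List.append_assoc, List.cons_append, List.nil_append]
        at hlt hgt four_point_weight ⊢
      omega
  obtain ⟨a, b, hab⟩ := List.length_eq_two.1
    (show (L.drop (L.length - 2)).length = 2 by rw [List.length_drop]; omega)
  have hlast : L = L.take (L.length - 2) ++ [a, b] := by rw [← hab, List.take_append_drop]
  have hgt := (increasing _ a b [] (by simpa using hlast)).2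
  rw [← hlast, h.oddLabels_eq] at hgt
  omega

end LP

theorem LTy.admissible_erase {B : Finset ℕ} {m : ℕ} {A : LTy} :
    Admissible B m A.erase ↔ (∀ k ∈ A.labels, k.Over B) ∧ totalWeight A.labels ≤ m := by
  simp [Admissible, guarded_erase, over_erase, lenP_erase]

theorem mem_labels_map_leaf {k : Label} {L : List LTy} :
    k ∈ LHedge.labels (L.map .leaf) ↔ ∃ A ∈ L, k ∈ A.labels := by
  induction L <;> simp_all

namespace IsInterpolant

variable {X Y L : List LTy} {C E : LTy}

theorem labels_le_oddLabels
    (hE : IsInterpolant (.hole (X.map .leaf) (Y.map .leaf)) (L.map .leaf) C E)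
    (h : LP ((X ++ L ++ Y).map .leaf) C) (thin : IsThin (X ++ L ++ Y) C) :
    E.labels ≤ oddLabels L := by
  refine Multiset.le_iff_count.2 fun k => ?_
  have segment_k := Multiset.le_iff_count.1 hE.labels_le_segment k
  have rest_k := Multiset.le_iff_count.1 hE.labels_le_rest k
  have thin_k := thin k
  have even_k := h.even_labelCount k
  simp only [LCtx.labels, Multiset.count_add, count_labels_map_leaf, labelCount_append,
    labelCount_singleton, count_oddLabels, Nat.even_iff] at *
  omega

theorem isThin (hE : IsInterpolant (.hole (X.map .leaf) (Y.map .leaf)) (L.map .leaf) C E)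
    (thin : IsThin (X ++ L ++ Y) C) : IsThin (X ++ [E] ++ Y) C := by
  intro k
  have segment_k := Multiset.le_iff_count.1 hE.labels_le_segment k
  have thin_k := thin k
  simp only [count_labels_map_leaf, labelCount_append, labelCount_singleton] at *
  omega

theorem admissible {B : Finset ℕ} {m : ℕ}
    (hE : IsInterpolant (.hole (X.map .leaf) (Y.map .leaf)) (L.map .leaf) C E)
    (h : LP ((X ++ L ++ Y).map .leaf) C) (thin : IsThin (X ++ L ++ Y) C)
    (hL : ∀ A ∈ L, Admissible B m A.erase) (weight_le : totalWeight (oddLabels L) ≤ m) :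
    Admissible B m E.erase := by
  refine LTy.admissible_erase.2
    ⟨fun k hk => ?_, (totalWeight_mono (hE.labels_le_oddLabels h thin)).trans weight_le⟩
  obtain ⟨A, hA, hkA⟩ := mem_labels_map_leaf.1 (Multiset.mem_of_le hE.labels_le_segment hk)
  exact (LTy.admissible_erase.1 (hL A hA)).1 k hkA

end IsInterpolant

theorem CutDeriv.mono {S T : Set (PHedge × PTy)} (hST : S ⊆ T) {H : PHedge} {C : PTy}
    (h : CutDeriv S H C) : CutDeriv T H C := by
  induction h with
  | base _ _ h => exact .base _ _ (hST h)
  | cut _ _ _ _ _ _ ihA ihC => exact .cut _ _ _ _ ihA ihC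

theorem mem_SBm' {B : Finset ℕ} {m : ℕ} {L : List LTy} {C : LTy} (h : LP (L.map .leaf) C)
    (hlen : L.length ≤ 2) (hLC : ∀ A ∈ C :: L, Admissible B m A.erase) :
    ((L.map LTy.erase).map .leaf, C.erase) ∈ SBm' B m :=
  ⟨L.map LTy.erase, C.erase, rfl, by simpa using hlen, by simpa [Admissible] using hLC,
    h.erase_leaves⟩

theorem LP.cutDeriv {B : Finset ℕ} {m : ℕ} {L : List LTy} {C : LTy} (h : LP (L.map .leaf) C)
    (thin : IsThin L C) (hLC : ∀ A ∈ C :: L, Admissible B m A.erase) :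
    CutDeriv (SBm' B m) ((L.map LTy.erase).map .leaf) C.erase := by
  induction hn : L.length using Nat.strong_induction_on generalizing L with
  | h n ih =>
  by_cases hlen : L.length ≤ 2
  · exact .base _ _ (mem_SBm' h hlen hLC)
  have weight_le (A) (hA : A ∈ C :: L) : totalWeight (oddLabels [A]) ≤ m :=
    (totalWeight_mono (oddLabels_singleton_le A)).trans (LTy.admissible_erase.1 (hLC A hA)).2
  obtain ⟨X, a, b, Y, rfl, hab⟩ := h.exists_adjacent_pair thin (by omega)
    (fun A hA => weight_le A (by simp [hA])) (weight_le C (by simp))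
  obtain ⟨E, hE⟩ : ∃ E, IsInterpolant (.hole (X.map .leaf) (Y.map .leaf))
      ([a, b].map .leaf) C E := h.interpolable (by simp) (by simp)
  have hE_adm := hE.admissible h thin (fun A hA => hLC A (by grind)) hab
  have pair := mem_SBm' (B := B) (m := m) hE.left (by simp) (by grind)
  have rest := ih _ (by grind) (L := X ++ [E] ++ Y) (by simpa using hE.right) (hE.isThin thin)
    (by grind) rfl
  have := CutDeriv.cut _ (.hole ((X.map LTy.erase).map .leaf) ((Y.map LTy.erase).map .leaf))
    _ _ (.base _ _ pair) (by simpa using rest)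
  simpa using this

theorem exists_eq_map_leaf_of_map_erase {H : LHedge} {L : List PTy}
    (h : H.map LTree.erase = L.map .leaf) :
    ∃ L' : List LTy, H = L'.map .leaf ∧ L'.map LTy.erase = L := by
  induction L generalizing H with
  | nil => exact ⟨[], by simpa using h, rfl⟩
  | cons A L ih =>
    obtain ⟨t, H, rfl, ht, hH⟩ := List.map_eq_cons_iff.1 h
    obtain ⟨A, rfl, rfl⟩ := LTree.erase_eq_leaf.1 ht
    obtain ⟨L, rfl, rfl⟩ := ih hH
    exact ⟨A :: L, rfl, rfl⟩

theorem yieldHedge_map_leaf (L : List PTy) : yieldHedge (L.map .leaf) = L := by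
  induction L with
  | nil => simp [yieldHedge]
  | cons A L ih => simp [yieldHedge, yieldTree, ih]

theorem PProvS1.cutDeriv_of_bracketFree {B : Finset ℕ} {m : ℕ} {L : List PTy} {C : PTy}
    (hL : ∀ A ∈ L, Admissible B m A) (hC : Admissible B m C) (h : PProvS1 (L.map .leaf) C) :
    CutDeriv (SBm' B m) (L.map .leaf) C := by
  obtain ⟨H, C, hP, hH, rfl, thin⟩ :=
    (ThinlyLabellable.cutFreeClosed (Admissible B m)).of_provable (isGuardedClass_admissible B m)
      (by rwa [yieldHedge_map_leaf]) hC h ∅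
  obtain ⟨L, rfl, rfl⟩ := exists_eq_map_leaf_of_map_erase hH
  exact hP.cutDeriv (fun k => by simpa [labelCount] using (thin k).1) (by simpa [hC] using hL)

/-! ### Elimination of brackets -/

/-- `Collapses ok L X`: a bracket around the sequence `L` may be replaced by the type `X`, on
account of `⟨A⟩ ⇒ ◇A`, `⟨□↓A⟩ ⇒ A` or `⟨⟩ ⇒ ◇1`. -/
inductive Collapses (ok : PTy → Prop) : List PTy → PTy → Prop
  | dia {L A} : A ≠ .one → ok (.dia A) → PProvS1 (L.map .leaf) A → Collapses ok L (.dia A)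
  | box {L A} : ok (.box A) → PProvS1 (L.map .leaf) (.box A) → Collapses ok L A
  | diaOne : ok (.dia .one) → Collapses ok [] (.dia .one)

/-- `Flattens ok H L`: collapsing the brackets of `H` from the bottom up can lead to `L`. -/
inductive Flattens (ok : PTy → Prop) : PHedge → List PTy → Prop
  | nil : Flattens ok [] []
  | leaf {A H L} : ok A → Flattens ok H L → Flattens ok (.leaf A :: H) (A :: L)
  | node {K M X H L} : Flattens ok K M → Collapses ok M X → Flattens ok H L →
      Flattens ok (.node K :: H) (X :: L)

/-- The sequent becomes provable and bracket-free by collapsing its brackets. -/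
def FlatProvable (ok : PTy → Prop) (H : PHedge) (C : PTy) : Prop :=
  ∃ L, Flattens ok H L ∧ PProvS1 (L.map .leaf) C

section Flattening

variable {ok : PTy → Prop} {L : List PTy} {A B C X : PTy} {G H K : PHedge}

theorem PProvS1.cut_singleton (hG : PProvS1 G A) (hA : PProvS1 [.leaf A] C) : PProvS1 G C := by
  simpa using PProvS1.cut G (.hole [] []) A C hG (by simpa)

namespace Collapses

theorem provable (h : Collapses ok L X) : PProvS1 [.node (L.map .leaf)] X := by
  cases h with
  | dia _ _ h => exact .diaR _ _ h
  | box _ h =>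
    simpa using PProvS1.cut _ (.brk (.hole [] []) [] []) _ X h (by simpa using PProvS1.node_box X)
  | diaOne _ => exact .node_nil

theorem ok_right (hok : IsGuardedClass ok) (h : Collapses ok L X) : ok X := by
  cases h with
  | dia _ hA _ | diaOne hA => exact hA
  | box hA _ => exact hok.of_box hA

end Collapses

namespace Flattens

theorem forall_ok (hok : IsGuardedClass ok) (h : Flattens ok H L) : ∀ A ∈ L, ok A := by
  induction h with
  | nil => simp
  | leaf hA _ ih => simpa [hA] using ih
  | node _ hX _ _ ih => simpa [hX.ok_right hok] using ih

theorem append {M : List PTy} (hH : Flattens ok H L) (hK : Flattens ok K M) :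
    Flattens ok (H ++ K) (L ++ M) := by
  induction hH with
  | nil => exact hK
  | leaf hA _ ih => exact .leaf hA ih
  | node h hX _ _ ih => exact .node h hX ih

theorem singleton_leaf (hA : ok A) : Flattens ok [.leaf A] [A] := .leaf hA .nil

theorem eq_singleton_of_leaf (h : Flattens ok [.leaf A] L) : L = [A] := by
  cases h with
  | leaf _ h => cases h; rfl

theorem exists_of_node (h : Flattens ok [.node K] L) :
    ∃ M X, L = [X] ∧ Flattens ok K M ∧ Collapses ok M X := by
  cases h with
  | node hK hX h => cases h; exact ⟨_, _, rfl, hK, hX⟩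

theorem exists_of_append (h : Flattens ok (H ++ K) L) :
    ∃ M N, L = M ++ N ∧ Flattens ok H M ∧ Flattens ok K N := by
  induction H generalizing L with
  | nil => exact ⟨[], L, rfl, .nil, h⟩
  | cons t H ih =>
    cases h with
    | leaf hA h =>
      obtain ⟨M, N, rfl, hM, hN⟩ := ih h
      exact ⟨_ :: M, N, rfl, .leaf hA hM, hN⟩
    | node hK hX h =>
      obtain ⟨M, N, rfl, hM, hN⟩ := ih h
      exact ⟨_ :: M, N, rfl, .node hK hX hM, hN⟩

end Flattens

/-- Every flattening of `H` can be exchanged for one of `H'` in provable sequents, so that `H` may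
be replaced by `H'` in antecedents without losing `FlatProvable`. The clause on `[]` is there
because a bracket around `H` that collapses to `◇1` has to remain empty. -/
def Exchangeable (ok : PTy → Prop) (H H' : PHedge) : Prop :=
  ∀ ⦃L⦄, Flattens ok H L → ∃ L', Flattens ok H' L' ∧ (L = [] → L' = []) ∧
    ∀ (D : PCtx) C, PProvS1 (D.plug (L.map .leaf)) C → PProvS1 (D.plug (L'.map .leaf)) C

namespace Exchangeable

variable {H' : PHedge}

theorem plug (h : Exchangeable ok H H') (D : PCtx) : Exchangeable ok (D.plug H) (D.plug H') := by
  induction D with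
  | hole a b =>
    intro L hL
    obtain ⟨_, N, rfl, haH, hb⟩ := hL.exists_of_append
    obtain ⟨M, L, rfl, ha, hH⟩ := haH.exists_of_append
    obtain ⟨L', hL', hnil, hprov⟩ := h hH
    refine ⟨M ++ L' ++ N, (ha.append hL').append hb, by simp_all, fun E C hC => ?_⟩
    simpa using hprov (E.comp (.hole (M.map .leaf) (N.map .leaf))) C (by simpa using hC)
  | brk D a b ih =>
    intro L hL
    obtain ⟨M, _, rfl, ha, hKb⟩ := hL.exists_of_append
    cases hKb with
    | @node _ L X _ N hK hX hb =>
      obtain ⟨L', hL', hnil, hprov⟩ := ih hK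
      have hX' : Collapses ok L' X := by
        cases hX with
        | dia hA hok hX => exact .dia hA hok (by simpa using hprov (.hole [] []) _ (by simpa))
        | box hok hX => exact .box hok (by simpa using hprov (.hole [] []) _ (by simpa))
        | diaOne hok => exact hnil rfl ▸ .diaOne hok
      exact ⟨M ++ X :: N, ha.append (.node hL' hX' hb), id, fun _ _ h => h⟩

theorem flatProvable (h : Exchangeable ok H H') (D : PCtx) (hC : FlatProvable ok (D.plug H) C) :
    FlatProvable ok (D.plug H') C := by
  obtain ⟨L, hL, hC⟩ := hC
  obtain ⟨L', hL', -, hprov⟩ := h.plug D hL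
  exact ⟨L', hL', by simpa using hprov (.hole [] []) C (by simpa)⟩

theorem singleton_leaf (hX : ok X)
    (hH : ∀ ⦃L⦄, Flattens ok H L → ∃ A, L = [A] ∧ PProvS1 [.leaf X] A) :
    Exchangeable ok H [.leaf X] := by
  intro L hL
  obtain ⟨A, rfl, hXA⟩ := hH hL
  exact ⟨[X], .singleton_leaf hX, by simp, fun D C hC => .cut _ D A C hXA hC⟩

theorem ldiv (hok : ok (.ldiv A B)) (hG : FlatProvable ok G A) :
    Exchangeable ok [.leaf B] (G ++ [.leaf (.ldiv A B)]) := by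
  intro L hL
  obtain rfl := hL.eq_singleton_of_leaf
  obtain ⟨M, hM, hA⟩ := hG
  exact ⟨M ++ [.ldiv A B], hM.append (.singleton_leaf hok), by simp,
    fun D C hC => by simpa using PProvS1.ldivL _ D A B C hA hC⟩

theorem rdiv (hok : ok (.rdiv B A)) (hG : FlatProvable ok G A) :
    Exchangeable ok [.leaf B] (.leaf (.rdiv B A) :: G) := by
  intro L hL
  obtain rfl := hL.eq_singleton_of_leaf
  obtain ⟨M, hM, hA⟩ := hG
  exact ⟨.rdiv B A :: M, .leaf hok hM, by simp, fun D C hC => .rdivL _ D A B C hA hC⟩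

theorem mul (hok : ok (.mul A B)) :
    Exchangeable ok [.leaf A, .leaf B] [.leaf (.mul A B)] := by
  intro L hL
  obtain ⟨M, N, rfl, hM, hN⟩ := hL.exists_of_append (H := [.leaf A])
  obtain rfl := hM.eq_singleton_of_leaf
  obtain rfl := hN.eq_singleton_of_leaf
  exact ⟨[.mul A B], .singleton_leaf hok, by simp, fun D C hC => .mulL D A B C hC⟩

theorem dia (hok : ok (.dia A)) : Exchangeable ok [.node [.leaf A]] [.leaf (.dia A)] :=
  singleton_leaf hok fun _ hL => by
    obtain ⟨M, X, rfl, hM, hX⟩ := hL.exists_of_node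
    obtain rfl := hM.eq_singleton_of_leaf
    exact ⟨X, rfl, .diaL (.hole [] []) A X hX.provable⟩

theorem diaOne (hok : ok (.dia .one)) : Exchangeable ok [.node []] [.leaf (.dia .one)] :=
  singleton_leaf hok fun _ hL => by
    obtain ⟨M, X, rfl, hM, hX⟩ := hL.exists_of_node
    cases hM
    exact ⟨X, rfl, .diaOneL (.hole [] []) hX.provable⟩

theorem box (hok : ok (.box A)) : Exchangeable ok [.leaf A] [.node [.leaf (.box A)]] := by
  intro L hL
  obtain rfl := hL.eq_singleton_of_leaf
  exact ⟨[A], .node (.singleton_leaf hok) (.box hok (.refl _)) .nil, by simp, fun _ _ h => h⟩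

end Exchangeable

theorem FlatProvable.cutFreeClosed (ok : PTy → Prop) : CutFreeClosed ok (FlatProvable ok) where
  id p hok := ⟨[.prim p], .singleton_leaf hok, .id p⟩
  ldivL _ D _ _ _ hok hA hC := (Exchangeable.ldiv hok hA).flatProvable D hC
  ldivR _ _ _ _ h := by
    obtain ⟨_, hL, hB⟩ := h
    cases hL with
    | leaf _ hL => exact ⟨_, hL, .ldivR _ _ _ hB⟩
  rdivL _ D _ _ _ hok hA hC := (Exchangeable.rdiv hok hA).flatProvable D hC
  rdivR _ _ _ _ h := by
    obtain ⟨_, hL, hB⟩ := h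
    obtain ⟨M, N, rfl, hM, hN⟩ := hL.exists_of_append
    obtain rfl := hN.eq_singleton_of_leaf
    exact ⟨M, hM, .rdivR _ _ _ (by simpa using hB)⟩
  mulL D _ _ _ hok hC := (Exchangeable.mul hok).flatProvable D hC
  mulR _ _ _ _ _ h₁ h₂ := by
    obtain ⟨L, hL, hA⟩ := h₁
    obtain ⟨M, hM, hB⟩ := h₂
    exact ⟨L ++ M, hL.append hM, by simpa using PProvS1.mulR _ _ _ _ hA hB⟩
  diaL D _ _ _ hok hC := (Exchangeable.dia hok).flatProvable D hC
  diaR _ A hA hok h := by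
    obtain ⟨L, hL, hLA⟩ := h
    exact ⟨[.dia A], .node hL (.dia hA hok hLA) .nil, .refl _⟩
  boxL D _ _ hok hC := (Exchangeable.box hok).flatProvable D hC
  boxR _ _ _ h := by
    obtain ⟨_, hL, hA⟩ := h
    obtain ⟨M, X, rfl, hM, hX⟩ := hL.exists_of_node
    exact ⟨M, hM, .boxR _ _ (hX.provable.cut_singleton hA)⟩
  diaOneL D _ hok hC := (Exchangeable.diaOne hok).flatProvable D hC
  diaOneR hok := ⟨[.dia .one], .node .nil (.diaOne hok) .nil, .refl _⟩

end Flattening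

theorem CutDeriv.provable {S : Set (PHedge × PTy)} {H : PHedge} {C : PTy}
    (hS : ∀ G A, (G, A) ∈ S → PProvS1 G A) (h : CutDeriv S H C) : PProvS1 H C := by
  induction h with
  | base G A h => exact hS G A h
  | cut _ _ _ _ _ _ ihA ihC => exact .cut _ _ _ _ ihA ihC

section BracketElimination

variable {B : Finset ℕ} {m : ℕ} {L : List PTy} {C X : PTy} {H : PHedge}

theorem provable_of_mem_TBm' (h : (H, C) ∈ TBm' B m) : PProvS1 H C := by
  rcases h with ((⟨L, A, e, -, -, h⟩ | e) | ⟨A, -, -, -, e⟩) | ⟨A, -, -, -, e⟩ <;>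
    obtain ⟨rfl, rfl⟩ := Prod.mk.inj e
  · exact h
  · exact .node_nil
  · exact .diaR _ _ (.refl _)
  · exact .node_box _

theorem SBm'_subset_TBm' : SBm' B m ⊆ TBm' B m := fun _ h => .inl (.inl (.inl h))

theorem node_dia_mem_TBm' {A : PTy} (hA : A ≠ .one) (h : Admissible B m (.dia A)) :
    ([.node [.leaf A]], .dia A) ∈ TBm' B m := by
  have hA := (isGuardedClass_admissible B m).of_dia hA h
  have hm : lenP A + 2 ≤ m := h.2.2
  exact .inl (.inr ⟨A, hA.1, hA.2.1, by omega, rfl⟩)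

theorem node_box_mem_TBm' {A : PTy} (h : Admissible B m (.box A)) :
    ([.node [.leaf (.box A)]], A) ∈ TBm' B m := by
  have hA := (isGuardedClass_admissible B m).of_box h
  have hm : lenP A + 2 ≤ m := h.2.2
  exact .inr ⟨A, hA.1, hA.2.1, by omega, rfl⟩

theorem Collapses.cutDeriv (hL : ∀ A ∈ L, Admissible B m A)
    (h : Collapses (Admissible B m) L X) : CutDeriv (TBm' B m) [.node (L.map .leaf)] X := by
  have node_cut {A : PTy} (hA : Admissible B m A) (hLA : PProvS1 (L.map .leaf) A)
      (hX : ([PTree.node [.leaf A]], X) ∈ TBm' B m) :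
      CutDeriv (TBm' B m) [.node (L.map .leaf)] X := by
    have hLA := (hLA.cutDeriv_of_bracketFree hL hA).mono SBm'_subset_TBm'
    simpa using CutDeriv.cut _ (.brk (.hole [] []) [] []) A X hLA
      (by simpa using .base _ _ hX)
  cases h with
  | dia hA hok h =>
    exact node_cut ((isGuardedClass_admissible B m).of_dia hA hok) h (node_dia_mem_TBm' hA hok)
  | box hok h => exact node_cut hok h (node_box_mem_TBm' hok)
  | diaOne _ => exact .base _ _ (.inl (.inl (.inr rfl)))

theorem Flattens.cutDeriv (h : Flattens (Admissible B m) H L) (D : PCtx)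
    (hC : CutDeriv (TBm' B m) (D.plug (L.map .leaf)) C) : CutDeriv (TBm' B m) (D.plug H) C := by
  induction h generalizing D with
  | nil => exact hC
  | @leaf A H L _ _ ih =>
    simpa using ih (D.comp (.hole [.leaf A] [])) (by simpa using hC)
  | @node K M X H L hK hX _ ihK ihH =>
    have hXH : CutDeriv (TBm' B m) (D.plug (.leaf X :: H)) C := by
      simpa using ihH (D.comp (.hole [.leaf X] [])) (by simpa using hC)
    have hMH := CutDeriv.cut _ (D.comp (.hole [] H)) X C
      (hX.cutDeriv (hK.forall_ok (isGuardedClass_admissible B m))) (by simpa using hXH)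
    simpa using ihK (D.comp (.brk (.hole [] []) [] H)) (by simpa using hMH)

end BracketElimination

/-- An L*₁◇ sequent whose yield consists of guarded types over `B` of length ≤ m is
provable in L*₁◇ iff it is derivable from `T'_{B,m}` using only Cut. -/
theorem provable_iff_cut_derivable_from_TBm' (B : Finset ℕ) (m : ℕ) (hm : 0 < m)
    (G : PHedge) (C : PTy)
    (hall : ∀ A ∈ yieldHedge G ++ [C], A.guarded ∧ A.over B ∧ lenP A ≤ m) :
    PProvS1 G C ↔ CutDeriv (TBm' B m) G C := by
  have hG : ∀ A ∈ yieldHedge G, Admissible B m A := fun A hA => hall A (by simp [hA])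
  have hC : Admissible B m C := hall C (by simp)
  have hok := isGuardedClass_admissible B m
  constructor
  · intro h
    obtain ⟨L, hL, hLC⟩ := (FlatProvable.cutFreeClosed _).of_provable hok hG hC h
    have hcut := (hLC.cutDeriv_of_bracketFree (hL.forall_ok hok) hC).mono SBm'_subset_TBm'
    simpa using hL.cutDeriv (.hole [] []) (by simpa using hcut)
  · exact CutDeriv.provable fun _ _ => provable_of_mem_TBm'
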